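/- arXiv:1807.06345 — 5 statements merged into one kernel-verified Lean document; each statement's English description precedes it below -/
import Mathlib

section
/- Second marginal entropy inequality for the classical triangle scenario: let A, B, C be mutually independent finite random variables and let X = f(B, C), Y = g(A, C), Z = h(A, B) for deterministic functions f, g, h. Then -5H(X) - 5H(Y) - 5H(Z) + 4H(X,Y) + 4H(X,Z) + 4H(Y,Z) - 2H(X,Y,Z) ≥ 0, where H denotes the Shannon entropy of the indicated joint random variable. -/
open MeasureTheory ProbabilityTheory

/-- Shannon entropy of a finite-valued random variable `X` under the measure `μ`. -/
noncomputable def entH {Ω E : Type*} [MeasurableSpace Ω] [Fintype E]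
    (μ : Measure Ω) (X : Ω → E) : ℝ :=
  ∑ e : E, Real.negMulLog (μ (X ⁻¹' {e})).toReal

/-- Mutual information `I(X : Y)`. -/
noncomputable def mutInf {Ω E F : Type*} [MeasurableSpace Ω] [Fintype E] [Fintype F]
    (μ : Measure Ω) (X : Ω → E) (Y : Ω → F) : ℝ :=
  entH μ X + entH μ Y - entH μ (fun ω => (X ω, Y ω))

/-- Conditional Shannon entropy `H(X | Y)`. -/
noncomputable def condEnt {Ω E F : Type*} [MeasurableSpace Ω] [Fintype E] [Fintype F]
    (μ : Measure Ω) (X : Ω → E) (Y : Ω → F) : ℝ :=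
  entH μ (fun ω => (X ω, Y ω)) - entH μ Y

/-- Conditional mutual information `I(X : Y | Z)`. -/
noncomputable def condMutInf {Ω E F G : Type*} [MeasurableSpace Ω]
    [Fintype E] [Fintype F] [Fintype G]
    (μ : Measure Ω) (X : Ω → E) (Y : Ω → F) (Z : Ω → G) : ℝ :=
  entH μ (fun ω => (X ω, Z ω)) + entH μ (fun ω => (Y ω, Z ω))
    - entH μ (fun ω => (X ω, Y ω, Z ω)) - entH μ Z

open Classical in
/-- Mass of the equivalence class of `w`. -/
noncomputable def clsMass {W : Type*} [Fintype W] (p : W → ℝ) (r : W → W → Prop) (w : W) : ℝ :=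
  ∑ w', if r w w' then p w' else 0

/-- Entropy of the partition given by `r`. -/
noncomputable def relEnt {W : Type*} [Fintype W] (p : W → ℝ) (r : W → W → Prop) : ℝ :=
  -∑ w, p w * Real.log (clsMass p r w)

lemma clsMass_nonneg {W : Type*} [Fintype W] {p : W → ℝ} (hp : ∀ w, 0 ≤ p w)
    (r : W → W → Prop) (w : W) : 0 ≤ clsMass p r w := by
  unfold clsMass
  exact Finset.sum_nonneg fun w' _ => by split_ifs <;> simp [hp]

lemma le_clsMass {W : Type*} [Fintype W] {p : W → ℝ} (hp : ∀ w, 0 ≤ p w)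
    {r : W → W → Prop} (hr : Equivalence r) (w : W) : p w ≤ clsMass p r w := by
  classical
  unfold clsMass
  have := Finset.single_le_sum (f := fun w' => if r w w' then p w' else 0)
    (fun w' _ => by split_ifs <;> simp [hp]) (Finset.mem_univ w)
  simpa [hr.refl w] using this

lemma clsMass_congr {W : Type*} [Fintype W] (p : W → ℝ)
    {r : W → W → Prop} (hr : Equivalence r) {w w' : W} (h : r w w') :
    clsMass p r w = clsMass p r w' := by
  classical
  unfold clsMass
  refine Finset.sum_congr rfl fun x _ => ?_
  have : r w x ↔ r w' x := ⟨fun k => hr.trans (hr.symm h) k, fun k => hr.trans h k⟩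
  simp [this]

/-- Summing `p / mass` over a subset of one class gives at most one. -/
lemma sum_div_clsMass_le {W : Type*} [Fintype W] {p : W → ℝ} (hp : ∀ w, 0 ≤ p w)
    {r : W → W → Prop} (hr : Equivalence r) (P : W → Prop)
    [DecidablePred P] (hP : ∀ w w', P w → P w' → r w w') :
    ∑ w, (if P w then p w / clsMass p r w else 0) ≤ 1 := by
  classical
  by_cases hex : ∃ w0, P w0
  · obtain ⟨w0, h0⟩ := hex
    calc ∑ w, (if P w then p w / clsMass p r w else 0)
        ≤ ∑ w, (if r w0 w then p w else 0) / clsMass p r w0 := by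
          refine Finset.sum_le_sum fun w _ => ?_
          by_cases hw : P w
          · have := hP w0 w h0 hw
            simp [hw, this, clsMass_congr p hr this]
          · simp only [hw, if_false]
            refine div_nonneg ?_ (clsMass_nonneg hp r w0)
            split_ifs <;> simp [hp]
      _ = clsMass p r w0 / clsMass p r w0 := by
          rw [← Finset.sum_div]; rfl
      _ ≤ 1 := div_self_le_one _
  · push Not at hex
    simp [hex]

lemma relEnt_submod {W : Type*} [Fintype W] {p : W → ℝ} (hp : ∀ w, 0 ≤ p w)
    {a b d : W → W → Prop} (ha : Equivalence a) (hb : Equivalence b) (hd : Equivalence d)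
    (had : ∀ w w', a w w' → d w w') (hbd : ∀ w w', b w w' → d w w') :
    relEnt p (fun w w' => a w w' ∧ b w w') + relEnt p d ≤ relEnt p a + relEnt p b := by
  classical
  set c : W → W → Prop := fun w w' => a w w' ∧ b w w' with hcdef
  have hc : Equivalence c := ⟨fun w => ⟨ha.refl w, hb.refl w⟩,
    fun h => ⟨ha.symm h.1, hb.symm h.2⟩, fun h k => ⟨ha.trans h.1 k.1, hb.trans h.2 k.2⟩⟩
  have key : ∑ w, p w * (clsMass p a w * clsMass p b w / (clsMass p c w * clsMass p d w))
      ≤ ∑ w, p w := by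
    calc ∑ w, p w * (clsMass p a w * clsMass p b w / (clsMass p c w * clsMass p d w))
        = ∑ w, ∑ w1, ∑ w2, (if d w1 w2 then p w1 * p w2 / clsMass p d w1 else 0) *
            (if a w w1 ∧ b w w2 then p w / clsMass p c w else 0) := by
          refine Finset.sum_congr rfl fun w _ => ?_
          have e : clsMass p a w * clsMass p b w = ∑ w1, ∑ w2,
              (if a w w1 then p w1 else 0) * (if b w w2 then p w2 else 0) := by
            rw [← Finset.sum_mul_sum]; rfl
          rw [e, Finset.sum_div, Finset.mul_sum]
          refine Finset.sum_congr rfl fun w1 _ => ?_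
          rw [Finset.sum_div, Finset.mul_sum]
          refine Finset.sum_congr rfl fun w2 _ => ?_
          by_cases h1 : a w w1
          · by_cases h2 : b w w2
            · have h3 : d w1 w2 := hd.trans (hd.symm (had _ _ h1)) (hbd _ _ h2)
              simp only [h1, h2, h3, and_self, if_true]
              rw [clsMass_congr p hd (had _ _ h1)]
              ring
            · simp [h2]
          · simp [h1]
      _ = ∑ w1, ∑ w2, (if d w1 w2 then p w1 * p w2 / clsMass p d w1 else 0) *
            ∑ w, (if a w w1 ∧ b w w2 then p w / clsMass p c w else 0) := by
          rw [Finset.sum_comm]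
          refine Finset.sum_congr rfl fun w1 _ => ?_
          rw [Finset.sum_comm]
          refine Finset.sum_congr rfl fun w2 _ => ?_
          rw [Finset.mul_sum]
      _ ≤ ∑ w1, ∑ w2, (if d w1 w2 then p w1 * p w2 / clsMass p d w1 else 0) := by
          refine Finset.sum_le_sum fun w1 _ => Finset.sum_le_sum fun w2 _ => ?_
          refine mul_le_of_le_one_right ?_ ?_
          · split_ifs
            · exact div_nonneg (mul_nonneg (hp _) (hp _)) (clsMass_nonneg hp _ _)
            · exact le_rfl
          · exact sum_div_clsMass_le hp hc (fun w => a w w1 ∧ b w w2)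
              fun w w' h h' => ⟨ha.trans h.1 (ha.symm h'.1), hb.trans h.2 (hb.symm h'.2)⟩
      _ = ∑ w1, p w1 / clsMass p d w1 * clsMass p d w1 := by
          refine Finset.sum_congr rfl fun w1 _ => ?_
          conv_rhs => rw [clsMass, Finset.mul_sum]
          refine Finset.sum_congr rfl fun w2 _ => ?_
          split_ifs
          · unfold clsMass; ring
          · simp
      _ ≤ ∑ w, p w := by
          refine Finset.sum_le_sum fun w _ => ?_
          by_cases h0 : clsMass p d w = 0
          · simp [h0, hp]
          · rw [div_mul_cancel₀ _ h0]
  have pt : ∀ w, p w * Real.log (clsMass p a w) + p w * Real.log (clsMass p b w)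
      - p w * Real.log (clsMass p c w) - p w * Real.log (clsMass p d w)
      ≤ p w * (clsMass p a w * clsMass p b w / (clsMass p c w * clsMass p d w)) - p w := by
    intro w
    rcases (hp w).eq_or_lt with h0 | h0
    · simp [← h0]
    have qa := h0.trans_le (le_clsMass hp ha w)
    have qb := h0.trans_le (le_clsMass hp hb w)
    have qc := h0.trans_le (le_clsMass hp hc w)
    have qd := h0.trans_le (le_clsMass hp hd w)
    have hl := Real.log_le_sub_one_of_pos (div_pos (mul_pos qa qb) (mul_pos qc qd))
    rw [Real.log_div (mul_pos qa qb).ne' (mul_pos qc qd).ne', Real.log_mul qa.ne' qb.ne',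
      Real.log_mul qc.ne' qd.ne'] at hl
    have := mul_le_mul_of_nonneg_left hl h0.le
    linarith
  have hs := Finset.sum_le_sum (s := Finset.univ) fun w _ => pt w
  simp only [Finset.sum_sub_distrib, Finset.sum_add_distrib] at hs
  unfold relEnt
  linarith

/-- Joint relation of a set of indices. -/
def jointRel {W : Type*} (D : Fin 6 → W → W → Prop) (s : Finset (Fin 6)) (w w' : W) : Prop :=
  ∀ i ∈ s, D i w w'

/-- Closure of a set of variables: indices `0 1 2` are `A B C`, `3 4 5` are `X Y Z`. -/
def triCl (s : Finset (Fin 6)) : Finset (Fin 6) :=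
  s ∪ (if 1 ∈ s ∧ 2 ∈ s then {3} else ∅) ∪ (if 0 ∈ s ∧ 2 ∈ s then {4} else ∅)
    ∪ (if 0 ∈ s ∧ 1 ∈ s then {5} else ∅)

lemma jointRel_equiv {W : Type*} {D : Fin 6 → W → W → Prop} (hD : ∀ i, Equivalence (D i))
    (s : Finset (Fin 6)) : Equivalence (jointRel D s) :=
  ⟨fun w i _ => (hD i).refl w, fun h i hi => (hD i).symm (h i hi),
    fun h k i hi => (hD i).trans (h i hi) (k i hi)⟩

lemma jointRel_triCl {W : Type*} {D : Fin 6 → W → W → Prop}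
    (h3 : ∀ w w', D 1 w w' → D 2 w w' → D 3 w w')
    (h4 : ∀ w w', D 0 w w' → D 2 w w' → D 4 w w')
    (h5 : ∀ w w', D 0 w w' → D 1 w w' → D 5 w w') (s : Finset (Fin 6)) :
    jointRel D (triCl s) = jointRel D s := by
  funext w w'
  refine propext ⟨fun h i hi => h i (by simp [triCl, hi]), fun h i hi => ?_⟩
  simp only [triCl, Finset.mem_union] at hi
  rcases hi with ((hi | hi) | hi) | hi
  · exact h i hi
  all_goals
    split_ifs at hi with hc
    · rw [Finset.mem_singleton] at hi
      subst hi
      first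
        | exact h3 _ _ (h _ hc.1) (h _ hc.2)
        | exact h4 _ _ (h _ hc.1) (h _ hc.2)
        | exact h5 _ _ (h _ hc.1) (h _ hc.2)
    · simp at hi

lemma joint_submod {W : Type*} [Fintype W] {p : W → ℝ} (hp : ∀ w, 0 ≤ p w)
    {D : Fin 6 → W → W → Prop} (hD : ∀ i, Equivalence (D i))
    (h3 : ∀ w w', D 1 w w' → D 2 w w' → D 3 w w')
    (h4 : ∀ w w', D 0 w w' → D 2 w w' → D 4 w w')
    (h5 : ∀ w w', D 0 w w' → D 1 w w' → D 5 w w')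
    (a b c d : Finset (Fin 6)) (hc : triCl (a ∪ b) = triCl c) (hda : d ⊆ triCl a)
    (hdb : d ⊆ triCl b) :
    relEnt p (jointRel D c) + relEnt p (jointRel D d)
      ≤ relEnt p (jointRel D a) + relEnt p (jointRel D b) := by
  have e : jointRel D c = fun w w' => jointRel D a w w' ∧ jointRel D b w w' := by
    rw [← jointRel_triCl h3 h4 h5, ← hc, jointRel_triCl h3 h4 h5]
    funext w w'
    simp only [jointRel, Finset.mem_union, eq_iff_iff]
    exact ⟨fun h => ⟨fun i hi => h i (.inl hi), fun i hi => h i (.inr hi)⟩,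
      fun h i hi => hi.elim (h.1 i) (h.2 i)⟩
  rw [e]
  refine relEnt_submod hp (jointRel_equiv hD a) (jointRel_equiv hD b) (jointRel_equiv hD d) ?_ ?_
  · intro w w' h i hi
    rw [← jointRel_triCl h3 h4 h5] at h
    exact h i (hda hi)
  · intro w w' h i hi
    rw [← jointRel_triCl h3 h4 h5] at h
    exact h i (hdb hi)

lemma tri_combination {W : Type*} [Fintype W] {p : W → ℝ} (hp : ∀ w, 0 ≤ p w)
    {D : Fin 6 → W → W → Prop} (hD : ∀ i, Equivalence (D i))
    (h3 : ∀ w w', D 1 w w' → D 2 w w' → D 3 w w')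
    (h4 : ∀ w w', D 0 w w' → D 2 w w' → D 4 w w')
    (h5 : ∀ w w', D 0 w w' → D 1 w w' → D 5 w w')
    (K : Finset (Fin 6) → ℝ) (hK : ∀ s, K s = relEnt p (jointRel D s))
    (i01 : K {0, 1} = K {0} + K {1}) (i02 : K {0, 2} = K {0} + K {2})
    (i12 : K {1, 2} = K {1} + K {2}) (i012 : K {0, 1, 2} = K {0} + K {1} + K {2}) :
    0 ≤ -5 * K {3} - 5 * K {4} - 5 * K {5} + 4 * K {3, 4} + 4 * K {3, 5} + 4 * K {4, 5}
      - 2 * K {3, 4, 5} := by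
  have sm : ∀ a b c d : Finset (Fin 6), triCl (a ∪ b) = triCl c → d ⊆ triCl a → d ⊆ triCl b →
      K c + K d ≤ K a + K b := by
    intro a b c d hc ha hb
    simp only [hK]
    exact joint_submod hp hD h3 h4 h5 a b c d hc ha hb
  -- I(AB : X | Z)
  have q0 := sm {0, 1} {3, 5} {0, 1, 3, 5} {5} (by decide) (by decide) (by decide)
  -- I(B : C | AZ)
  have q1 := sm {0, 1} {0, 2, 4, 5} {0, 1, 2} {0, 5} (by decide) (by decide) (by decide)
  -- I(A : C | BZ)
  have q2 := sm {0, 1} {1, 2, 3, 5} {0, 1, 2} {1, 5} (by decide) (by decide) (by decide)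
  -- I(AB : C | Z)
  have q3 := sm {0, 1} {2, 5} {0, 1, 2} {5} (by decide) (by decide) (by decide)
  -- I(X : Y | CZ)
  have q4 := sm {2, 3, 5} {2, 4, 5} {2, 3, 4, 5} {2, 5} (by decide) (by decide) (by decide)
  -- I(A : X | Y)
  have q5 := sm {0, 4} {3, 4} {0, 3, 4} {4} (by decide) (by decide) (by decide)
  -- I(AC : Z | Y)
  have q6 := sm {0, 2} {4, 5} {0, 2, 4, 5} {4} (by decide) (by decide) (by decide)
  -- I(Y : Z | AX)
  have q7 := sm {0, 3, 4} {0, 3, 5} {0, 3, 4, 5} {0, 3} (by decide) (by decide) (by decide)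
  -- I(B : Y | Z)
  have q8 := sm {1, 5} {4, 5} {1, 4, 5} {5} (by decide) (by decide) (by decide)
  -- I(A : X | Z)
  have q9 := sm {0, 5} {3, 5} {0, 3, 5} {5} (by decide) (by decide) (by decide)
  -- I(A : BC | X)
  have q10 := sm {0, 3} {1, 2} {0, 1, 2} {3} (by decide) (by decide) (by decide)
  -- I(AC : X | Y)
  have q11 := sm {0, 2} {3, 4} {0, 2, 3, 4} {4} (by decide) (by decide) (by decide)
  -- I(BC : Y | X)
  have q12 := sm {1, 2} {3, 4} {1, 2, 3, 4} {3} (by decide) (by decide) (by decide)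
  -- I(B : C | XYZ)
  have q13 := sm {1, 3, 4, 5} {2, 3, 4, 5} {1, 2, 3, 4, 5} {3, 4, 5} (by decide) (by decide) (by decide)
  -- I(B : C | AY)
  have q14 := sm {0, 1, 4, 5} {0, 2} {0, 1, 2} {0, 4} (by decide) (by decide) (by decide)
  -- I(X : Z | BY)
  have q15 := sm {1, 3, 4} {1, 4, 5} {1, 3, 4, 5} {1, 4} (by decide) (by decide) (by decide)
  -- I(BC : Z | X)
  have q16 := sm {1, 2} {3, 5} {1, 2, 3, 5} {3} (by decide) (by decide) (by decide)
  -- I(A : C | BX)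
  have q17 := sm {0, 1, 3, 5} {1, 2} {0, 1, 2} {1, 3} (by decide) (by decide) (by decide)
  -- I(C : Z | X)
  have q18 := sm {2, 3} {3, 5} {2, 3, 5} {3} (by decide) (by decide) (by decide)
  -- I(AC : B | Y)
  have q19 := sm {0, 2} {1, 4} {0, 1, 2} {4} (by decide) (by decide) (by decide)
  -- I(A : B | CX)
  have q20 := sm {0, 2, 3, 4} {1, 2} {0, 1, 2} {2, 3} (by decide) (by decide) (by decide)
  -- I(A : BC | XYZ)
  have q21 := sm {0, 3, 4, 5} {1, 2, 3, 4, 5} {0, 1, 2} {3, 4, 5} (by decide) (by decide) (by decide)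
  -- I(AB : Y | Z)
  have q22 := sm {0, 1} {4, 5} {0, 1, 4, 5} {5} (by decide) (by decide) (by decide)
  -- I(B : Y | X)
  have q23 := sm {1, 3} {3, 4} {1, 3, 4} {3} (by decide) (by decide) (by decide)
  -- I(C : Z | Y)
  have q24 := sm {2, 4} {4, 5} {2, 4, 5} {4} (by decide) (by decide) (by decide)
  -- I(A : B | CY)
  have q25 := sm {0, 2} {1, 2, 3, 4} {0, 1, 2} {2, 4} (by decide) (by decide) (by decide)
  linarith


lemma toReal_preimage {Ω W E : Type*} [MeasurableSpace Ω] [Fintype W]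
    (μ : Measure Ω) [IsProbabilityMeasure μ] (V : Ω → W)
    (hV : ∀ w, MeasurableSet (V ⁻¹' {w})) (φ : W → E) (e : E) [DecidablePred fun w => φ w = e] :
    (μ ((fun ω => φ (V ω)) ⁻¹' {e})).toReal
      = ∑ w, if φ w = e then (μ (V ⁻¹' {w})).toReal else 0 := by
  classical
  have hs : (fun ω => φ (V ω)) ⁻¹' {e}
      = ⋃ w ∈ (Finset.univ.filter fun w => φ w = e), V ⁻¹' {w} := by
    ext ω
    simp
  rw [hs, measure_biUnion_finset, ENNReal.toReal_sum, Finset.sum_filter]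
  · intro w _
    exact measure_ne_top _ _
  · intro w _ w' _ hne
    refine Set.disjoint_left.2 fun ω h1 h2 => hne ?_
    simp only [Set.mem_preimage, Set.mem_singleton_iff] at h1 h2
    rw [← h1, ← h2]
  · intro w _
    exact hV w

lemma entH_eq_relEnt {Ω W E : Type*} [MeasurableSpace Ω] [Fintype W] [Fintype E]
    (μ : Measure Ω) [IsProbabilityMeasure μ] (V : Ω → W)
    (hV : ∀ w, MeasurableSet (V ⁻¹' {w})) (φ : W → E) (F : Ω → E) (hF : ∀ ω, F ω = φ (V ω))
    (r : W → W → Prop) (hr : ∀ w w', r w w' ↔ φ w = φ w') :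
    entH μ F = relEnt (fun w => (μ (V ⁻¹' {w})).toReal) r := by
  classical
  obtain rfl : F = fun ω => φ (V ω) := funext hF
  unfold entH relEnt
  have hm : ∀ w, clsMass (fun w => (μ (V ⁻¹' {w})).toReal) r w
      = (μ ((fun ω => φ (V ω)) ⁻¹' {φ w})).toReal := by
    intro w
    rw [toReal_preimage μ V hV]
    unfold clsMass
    refine Finset.sum_congr rfl fun w' _ => ?_
    simp [hr, eq_comm]
  simp only [hm]
  rw [← Finset.sum_neg_distrib, ← Finset.sum_fiberwise Finset.univ φ]
  refine Finset.sum_congr rfl fun e _ => ?_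
  rw [Real.negMulLog]
  nth_rewrite 1 [toReal_preimage μ V hV]
  rw [← Finset.sum_filter, neg_mul, Finset.sum_mul, ← Finset.sum_neg_distrib]
  refine Finset.sum_congr rfl fun w hw => ?_
  rw [(Finset.mem_filter.1 hw).2]

lemma relEnt_mul {W : Type*} [Fintype W] {p : W → ℝ} {r s t : W → W → Prop}
    (h : ∀ w, clsMass p t w = clsMass p r w * clsMass p s w)
    (hr : ∀ w, p w ≠ 0 → clsMass p r w ≠ 0) (hs : ∀ w, p w ≠ 0 → clsMass p s w ≠ 0) :
    relEnt p t = relEnt p r + relEnt p s := by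
  unfold relEnt
  rw [← neg_add, ← Finset.sum_add_distrib]
  congr 1
  refine Finset.sum_congr rfl fun w _ => ?_
  by_cases h0 : p w = 0
  · simp [h0]
  · rw [h, Real.log_mul (hr w h0) (hs w h0)]
    ring

/-- **Second marginal entropy inequality for the classical triangle scenario**:
`-5H(X) - 5H(Y) - 5H(Z) + 4H(X,Y) + 4H(X,Z) + 4H(Y,Z) - 2H(X,Y,Z) ≥ 0`. -/
theorem triangle_marginal_inequality_two
    {Ω EA EB EC EX EY EZ : Type*} [MeasurableSpace Ω]
    [Fintype EA] [Fintype EB] [Fintype EC] [Fintype EX] [Fintype EY] [Fintype EZ]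
    [MeasurableSpace EA] [MeasurableSingletonClass EA]
    [MeasurableSpace EB] [MeasurableSingletonClass EB]
    [MeasurableSpace EC] [MeasurableSingletonClass EC]
    (μ : Measure Ω) [IsProbabilityMeasure μ]
    (A : Ω → EA) (B : Ω → EB) (C : Ω → EC)
    (hA : Measurable A) (hB : Measurable B) (hC : Measurable C)
    (hindep : ∀ (a : EA) (b : EB) (c : EC),
      μ (A ⁻¹' {a} ∩ B ⁻¹' {b} ∩ C ⁻¹' {c})
        = μ (A ⁻¹' {a}) * μ (B ⁻¹' {b}) * μ (C ⁻¹' {c}))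
    (f : EB → EC → EX) (g : EA → EC → EY) (h : EA → EB → EZ)
    (X : Ω → EX) (Y : Ω → EY) (Z : Ω → EZ)
    (hX : ∀ ω, X ω = f (B ω) (C ω)) (hY : ∀ ω, Y ω = g (A ω) (C ω))
    (hZ : ∀ ω, Z ω = h (A ω) (B ω)) :
    0 ≤ -5 * entH μ X - 5 * entH μ Y - 5 * entH μ Z
      + 4 * entH μ (fun ω => (X ω, Y ω)) + 4 * entH μ (fun ω => (X ω, Z ω))
      + 4 * entH μ (fun ω => (Y ω, Z ω))
      - 2 * entH μ (fun ω => (X ω, Y ω, Z ω)) := by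
  classical
  set V : Ω → EA × EB × EC := fun ω => (A ω, B ω, C ω) with hVdef
  have mA : ∀ a, MeasurableSet (A ⁻¹' {a}) := fun a => hA (measurableSet_singleton a)
  have mB : ∀ a, MeasurableSet (B ⁻¹' {a}) := fun a => hB (measurableSet_singleton a)
  have mC : ∀ a, MeasurableSet (C ⁻¹' {a}) := fun a => hC (measurableSet_singleton a)
  have hVs : ∀ w : EA × EB × EC,
      V ⁻¹' {w} = A ⁻¹' {w.1} ∩ B ⁻¹' {w.2.1} ∩ C ⁻¹' {w.2.2} := by
    intro w
    ext ω
    simp [hVdef, Prod.ext_iff, and_assoc]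
  have hV : ∀ w, MeasurableSet (V ⁻¹' {w}) := by
    intro w
    rw [hVs]
    exact ((mA _).inter (mB _)).inter (mC _)
  set p : EA × EB × EC → ℝ := fun w => (μ (V ⁻¹' {w})).toReal with hpdef
  have hp : ∀ w, 0 ≤ p w := fun w => ENNReal.toReal_nonneg
  let φ : EA × EB × EC → EX := fun w => f w.2.1 w.2.2
  let γ : EA × EB × EC → EY := fun w => g w.1 w.2.2
  let η : EA × EB × EC → EZ := fun w => h w.1 w.2.1
  let D : Fin 6 → EA × EB × EC → EA × EB × EC → Prop :=
    ![fun w w' => w.1 = w'.1, fun w w' => w.2.1 = w'.2.1, fun w w' => w.2.2 = w'.2.2,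
      fun w w' => φ w = φ w', fun w w' => γ w = γ w', fun w w' => η w = η w']
  have hD : ∀ i, Equivalence (D i) := by
    intro i
    fin_cases i <;>
      exact ⟨fun w => rfl, fun h => Eq.symm h, fun h k => Eq.trans h k⟩
  have h3 : ∀ w w', D 1 w w' → D 2 w w' → D 3 w w' := by
    intro w w' (k : w.2.1 = w'.2.1) (l : w.2.2 = w'.2.2)
    change f w.2.1 w.2.2 = f w'.2.1 w'.2.2
    rw [k, l]
  have h4 : ∀ w w', D 0 w w' → D 2 w w' → D 4 w w' := by
    intro w w' (k : w.1 = w'.1) (l : w.2.2 = w'.2.2)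
    change g w.1 w.2.2 = g w'.1 w'.2.2
    rw [k, l]
  have h5 : ∀ w w', D 0 w w' → D 1 w w' → D 5 w w' := by
    intro w w' (k : w.1 = w'.1) (l : w.2.1 = w'.2.1)
    change h w.1 w.2.1 = h w'.1 w'.2.1
    rw [k, l]
  let K : Finset (Fin 6) → ℝ := fun s => relEnt p (jointRel D s)
  -- marginal masses
  have sA : ∑ a, (μ (A ⁻¹' {a})).toReal = 1 := by
    have := toReal_preimage μ A mA (fun _ => ()) ()
    simpa using this.symm
  have sB : ∑ a, (μ (B ⁻¹' {a})).toReal = 1 := by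
    have := toReal_preimage μ B mB (fun _ => ()) ()
    simpa using this.symm
  have sC : ∑ a, (μ (C ⁻¹' {a})).toReal = 1 := by
    have := toReal_preimage μ C mC (fun _ => ()) ()
    simpa using this.symm
  have hpm : ∀ a b c, p (a, b, c)
      = (μ (A ⁻¹' {a})).toReal * (μ (B ⁻¹' {b})).toReal * (μ (C ⁻¹' {c})).toReal := by
    intro a b c
    simp only [hpdef]
    rw [hVs, hindep, ENNReal.toReal_mul, ENNReal.toReal_mul]
  obtain ⟨qa, hqa⟩ : ∃ q, q = fun a => (μ (A ⁻¹' {a})).toReal := ⟨_, rfl⟩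
  obtain ⟨qb, hqb⟩ : ∃ q, q = fun a => (μ (B ⁻¹' {a})).toReal := ⟨_, rfl⟩
  obtain ⟨qc, hqc⟩ : ∃ q, q = fun a => (μ (C ⁻¹' {a})).toReal := ⟨_, rfl⟩
  have ea : ∀ a, (μ (A ⁻¹' {a})).toReal = qa a := fun a => (congrFun hqa a).symm
  have eb : ∀ a, (μ (B ⁻¹' {a})).toReal = qb a := fun a => (congrFun hqb a).symm
  have ec : ∀ a, (μ (C ⁻¹' {a})).toReal = qc a := fun a => (congrFun hqc a).symm
  simp only [ea, eb, ec] at hpm sA sB sC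
  have mass : ∀ (s : Finset (Fin 6)) (w : EA × EB × EC) (P : EA → Prop) (Q : EB → Prop)
      (R : EC → Prop), (∀ a b c, jointRel D s w (a, b, c) ↔ P a ∧ Q b ∧ R c) →
      clsMass p (jointRel D s) w = (∑ a, if P a then qa a else 0) *
        (∑ b, if Q b then qb b else 0) * (∑ c, if R c then qc c else 0) := by
    intro s w P Q R hs
    unfold clsMass
    rw [Fintype.sum_prod_type, Finset.sum_mul_sum, Finset.sum_mul]
    refine Finset.sum_congr rfl fun a _ => ?_
    rw [Fintype.sum_prod_type, Finset.sum_mul]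
    refine Finset.sum_congr rfl fun b _ => ?_
    rw [Finset.mul_sum]
    refine Finset.sum_congr rfl fun c _ => ?_
    by_cases hP : P a <;> by_cases hQ : Q b <;> by_cases hR : R c <;> simp [hs, hP, hQ, hR, hpm]
  have m0 : ∀ w, clsMass p (jointRel D {0}) w = qa w.1 := by
    intro w
    rw [mass {0} w (fun a => w.1 = a) (fun _ => True) (fun _ => True) (by simp [jointRel, D])]
    simp [sB, sC]
  have m1 : ∀ w, clsMass p (jointRel D {1}) w = qb w.2.1 := by
    intro w
    rw [mass {1} w (fun _ => True) (fun b => w.2.1 = b) (fun _ => True) (by simp [jointRel, D])]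
    simp [sA, sC]
  have m2 : ∀ w, clsMass p (jointRel D {2}) w = qc w.2.2 := by
    intro w
    rw [mass {2} w (fun _ => True) (fun _ => True) (fun c => w.2.2 = c) (by simp [jointRel, D])]
    simp [sA, sB]
  have m01 : ∀ w, clsMass p (jointRel D {0, 1}) w = qa w.1 * qb w.2.1 := by
    intro w
    rw [mass {0, 1} w (fun a => w.1 = a) (fun b => w.2.1 = b) (fun _ => True)
      (by simp [jointRel, D])]
    simp [sC]
  have m02 : ∀ w, clsMass p (jointRel D {0, 2}) w = qa w.1 * qc w.2.2 := by
    intro w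
    rw [mass {0, 2} w (fun a => w.1 = a) (fun _ => True) (fun c => w.2.2 = c)
      (by simp [jointRel, D])]
    simp [sB]
  have m12 : ∀ w, clsMass p (jointRel D {1, 2}) w = qb w.2.1 * qc w.2.2 := by
    intro w
    rw [mass {1, 2} w (fun _ => True) (fun b => w.2.1 = b) (fun c => w.2.2 = c)
      (by simp [jointRel, D])]
    simp [sA]
  have m012 : ∀ w, clsMass p (jointRel D {0, 1, 2}) w = qa w.1 * qb w.2.1 * qc w.2.2 := by
    intro w
    rw [mass {0, 1, 2} w (fun a => w.1 = a) (fun b => w.2.1 = b) (fun c => w.2.2 = c)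
      (by simp [jointRel, D])]
    simp
  have nz : ∀ s w, p w ≠ 0 → clsMass p (jointRel D s) w ≠ 0 := fun s w hw =>
    ((lt_of_le_of_ne (hp w) hw.symm).trans_le (le_clsMass hp (jointRel_equiv hD s) w)).ne'
  have i01 : K {0, 1} = K {0} + K {1} :=
    relEnt_mul (fun w => by rw [m01, m0, m1]) (nz _) (nz _)
  have i02 : K {0, 2} = K {0} + K {2} :=
    relEnt_mul (fun w => by rw [m02, m0, m2]) (nz _) (nz _)
  have i12 : K {1, 2} = K {1} + K {2} :=
    relEnt_mul (fun w => by rw [m12, m1, m2]) (nz _) (nz _)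
  have i012 : K {0, 1, 2} = K {0} + K {1} + K {2} := by
    rw [← i01]
    exact relEnt_mul (fun w => by rw [m012, m01, m2]) (nz _) (nz _)
  have main := tri_combination hp hD h3 h4 h5 K (fun _ => rfl) i01 i02 i12 i012
  have e3 : entH μ X = K {3} :=
    entH_eq_relEnt μ V hV φ X hX _ (by simp [jointRel, D])
  have e4 : entH μ Y = K {4} :=
    entH_eq_relEnt μ V hV γ Y hY _ (by simp [jointRel, D])
  have e5 : entH μ Z = K {5} :=
    entH_eq_relEnt μ V hV η Z hZ _ (by simp [jointRel, D])
  have e34 : entH μ (fun ω => (X ω, Y ω)) = K {3, 4} :=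
    entH_eq_relEnt μ V hV (fun w => (φ w, γ w)) _ (fun ω => by rw [hX, hY]) _
      (by simp [jointRel, D])
  have e35 : entH μ (fun ω => (X ω, Z ω)) = K {3, 5} :=
    entH_eq_relEnt μ V hV (fun w => (φ w, η w)) _ (fun ω => by rw [hX, hZ]) _
      (by simp [jointRel, D])
  have e45 : entH μ (fun ω => (Y ω, Z ω)) = K {4, 5} :=
    entH_eq_relEnt μ V hV (fun w => (γ w, η w)) _ (fun ω => by rw [hY, hZ]) _
      (by simp [jointRel, D])
  have e345 : entH μ (fun ω => (X ω, Y ω, Z ω)) = K {3, 4, 5} :=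
    entH_eq_relEnt μ V hV (fun w => (φ w, γ w, η w)) _ (fun ω => by rw [hX, hY, hZ]) _
      (by simp [jointRel, D])
  rw [e3, e4, e5, e34, e35, e45, e345]
  exact main
end

section
/- Third marginal entropy inequality for the classical triangle scenario: let A, B, C be mutually independent finite random variables and let X = f(B, C), Y = g(A, C), Z = h(A, B) for deterministic functions f, g, h. Then -3H(X) - 3H(Y) - 3H(Z) + 2H(X,Y) + 2H(X,Z) + 3H(Y,Z) - H(X,Y,Z) ≥ 0, where H denotes the Shannon entropy of the indicated joint random variable. -/
open MeasureTheory ProbabilityTheory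

open Classical in
/-- The mass of the fibre of `F` through `s`. -/
noncomputable def fibMass {S E : Type*} [Fintype S] (p : S → ℝ) (F : S → E) (s : S) : ℝ :=
  ∑ t, if F t = F s then p t else 0

/-- Entropy of `F` under the weights `p`. -/
noncomputable def entW {S E : Type*} [Fintype S] (p : S → ℝ) (F : S → E) : ℝ :=
  -∑ s, p s * Real.log (fibMass p F s)

lemma le_fibMass {S E : Type*} [Fintype S] (p : S → ℝ) (hp : ∀ s, 0 ≤ p s) (F : S → E) (s : S) :
    p s ≤ fibMass p F s := by
  classical
  unfold fibMass
  have := Finset.single_le_sum (f := fun t => if F t = F s then p t else 0) (s := Finset.univ)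
    (fun t _ => by split_ifs <;> simp [hp]) (Finset.mem_univ s)
  simpa using this

lemma fibMass_nonneg {S E : Type*} [Fintype S] (p : S → ℝ) (hp : ∀ s, 0 ≤ p s) (F : S → E)
    (s : S) : 0 ≤ fibMass p F s := (hp s).trans (le_fibMass p hp F s)

lemma fibMass_congr {S E : Type*} [Fintype S] (p : S → ℝ) (F : S → E) {s t : S} (h : F s = F t) :
    fibMass p F s = fibMass p F t := by
  unfold fibMass; rw [h]

open Classical in
lemma ratio_sum_le {S T U V W : Type*} [Fintype S] (p : S → ℝ) (hp : ∀ s, 0 ≤ p s)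
    (hsum : ∑ s, p s = 1) (FU : S → U) (FV : S → V) (FT : S → T) (FW : S → W)
    (hT : ∀ s t, FU s = FU t → FV s = FV t → FT s = FT t)
    (hWU : ∀ s t, FU s = FU t → FW s = FW t) (hWV : ∀ s t, FV s = FV t → FW s = FW t) :
    ∑ s, p s * (fibMass p FU s * fibMass p FV s / (fibMass p FT s * fibMass p FW s)) ≤ 1 := by
  have e1 : ∑ s, p s * (fibMass p FU s * fibMass p FV s / (fibMass p FT s * fibMass p FW s))
      = ∑ t, ∑ r, p t * p r * ∑ s, (if FU t = FU s ∧ FV r = FV s then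
          p s / (fibMass p FT s * fibMass p FW s) else 0) := by
    have : ∀ s, p s * (fibMass p FU s * fibMass p FV s / (fibMass p FT s * fibMass p FW s))
        = ∑ t, ∑ r, p t * p r * (if FU t = FU s ∧ FV r = FV s then
          p s / (fibMass p FT s * fibMass p FW s) else 0) := by
      intro s
      have h2 : fibMass p FU s * fibMass p FV s = ∑ t, ∑ r, (if FU t = FU s then p t else 0) *
          (if FV r = FV s then p r else 0) := by
        rw [fibMass, fibMass, Finset.sum_mul_sum]
      rw [h2, mul_div_assoc', mul_comm, mul_div_assoc, Finset.sum_mul]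
      refine Finset.sum_congr rfl fun t _ => ?_
      rw [Finset.sum_mul]
      refine Finset.sum_congr rfl fun r _ => ?_
      by_cases h3 : FU t = FU s <;> by_cases h4 : FV r = FV s <;> simp [h3, h4]
    simp_rw [this]
    rw [Finset.sum_comm]
    refine Finset.sum_congr rfl fun t _ => ?_
    rw [Finset.sum_comm]
    refine Finset.sum_congr rfl fun r _ => ?_
    rw [Finset.mul_sum]
  have e2 : ∀ t r, ∑ s, (if FU t = FU s ∧ FV r = FV s then
          p s / (fibMass p FT s * fibMass p FW s) else 0)
        ≤ if FW r = FW t then (fibMass p FW t)⁻¹ else 0 := by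
    intro t r
    by_cases hex : ∃ s, FU t = FU s ∧ FV r = FV s
    · obtain ⟨s0, h1, h2⟩ := hex
      have hw : FW r = FW t := (hWV _ _ h2).trans (hWU _ _ h1).symm
      rw [if_pos hw]
      set Q : ℝ := ∑ s, if FU t = FU s ∧ FV r = FV s then p s else 0 with hQ
      have hQ0 : 0 ≤ Q := Finset.sum_nonneg fun s _ => by split_ifs <;> simp [hp]
      have hterm : ∀ s, (if FU t = FU s ∧ FV r = FV s then
          p s / (fibMass p FT s * fibMass p FW s) else 0)
          ≤ (if FU t = FU s ∧ FV r = FV s then p s else 0) * (Q⁻¹ * (fibMass p FW t)⁻¹) := by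
        intro s
        split_ifs with hs
        · rcases (hp s).eq_or_lt with h0 | h0
          · simp [← h0]
          have hQs : p s ≤ Q := by
            have := Finset.single_le_sum
              (f := fun s => if FU t = FU s ∧ FV r = FV s then p s else 0) (s := Finset.univ)
              (fun t _ => by split_ifs <;> simp [hp]) (Finset.mem_univ s)
            simp only [if_pos hs] at this
            exact this
          have hQT : Q ≤ fibMass p FT s := by
            refine Finset.sum_le_sum fun x _ => ?_
            by_cases hx : FU t = FU x ∧ FV r = FV x
            · rw [if_pos hx, if_pos (hT _ _ (hx.1.symm.trans hs.1) (hx.2.symm.trans hs.2))]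
            · rw [if_neg hx]; split_ifs <;> simp [hp]
          have hQpos : 0 < Q := h0.trans_le hQs
          rw [fibMass_congr p FW (hWU _ _ hs.1), div_eq_mul_inv, mul_inv]
          have := fibMass_nonneg p hp FW s
          gcongr
        · simp
      refine (Finset.sum_le_sum fun s _ => hterm s).trans ?_
      rw [← Finset.sum_mul, ← hQ, ← mul_assoc]
      have hi : 0 ≤ (fibMass p FW t)⁻¹ := inv_nonneg.2 (fibMass_nonneg p hp FW t)
      have : Q * Q⁻¹ ≤ 1 := mul_inv_le_one
      nlinarith
    · push Not at hex
      rw [Finset.sum_eq_zero]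
      · have hi : 0 ≤ (fibMass p FW t)⁻¹ := inv_nonneg.2 (fibMass_nonneg p hp FW t)
        split_ifs <;> simp [hi]
      · intro s _
        rw [if_neg]
        rintro ⟨h1, h2⟩
        exact hex s h1 h2
  rw [e1, ← hsum]
  refine Finset.sum_le_sum fun t _ => ?_
  calc ∑ r, p t * p r * ∑ s, (if FU t = FU s ∧ FV r = FV s then
          p s / (fibMass p FT s * fibMass p FW s) else 0)
      ≤ ∑ r, p t * ((if FW r = FW t then p r else 0) * (fibMass p FW t)⁻¹) := by
        refine Finset.sum_le_sum fun r _ => ?_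
        refine (mul_le_mul_of_nonneg_left (e2 t r) (mul_nonneg (hp t) (hp r))).trans ?_
        split_ifs <;> simp [mul_assoc]
    _ = p t * (fibMass p FW t * (fibMass p FW t)⁻¹) := by
        rw [← Finset.mul_sum, ← Finset.sum_mul]; rfl
    _ ≤ p t * 1 := mul_le_mul_of_nonneg_left mul_inv_le_one (hp t)
    _ = p t := mul_one _

lemma entW_submod {S T U V W : Type*} [Fintype S] (p : S → ℝ) (hp : ∀ s, 0 ≤ p s)
    (hsum : ∑ s, p s = 1) (FU : S → U) (FV : S → V) (FT : S → T) (FW : S → W)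
    (hT : ∀ s t, FU s = FU t → FV s = FV t → FT s = FT t)
    (hWU : ∀ s t, FU s = FU t → FW s = FW t) (hWV : ∀ s t, FV s = FV t → FW s = FW t) :
    entW p FT + entW p FW ≤ entW p FU + entW p FV := by
  have key := ratio_sum_le p hp hsum FU FV FT FW hT hWU hWV
  have h1 : ∀ s, p s * Real.log (fibMass p FU s) + p s * Real.log (fibMass p FV s)
      - p s * Real.log (fibMass p FT s) - p s * Real.log (fibMass p FW s)
      ≤ p s * (fibMass p FU s * fibMass p FV s / (fibMass p FT s * fibMass p FW s)) - p s := by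
    intro s
    rcases (hp s).eq_or_lt with h0 | h0
    · simp [← h0]
    have hU := h0.trans_le (le_fibMass p hp FU s)
    have hV := h0.trans_le (le_fibMass p hp FV s)
    have hT := h0.trans_le (le_fibMass p hp FT s)
    have hW := h0.trans_le (le_fibMass p hp FW s)
    have := Real.log_le_sub_one_of_pos (div_pos (mul_pos hU hV) (mul_pos hT hW))
    rw [Real.log_div (by positivity) (by positivity), Real.log_mul hU.ne' hV.ne',
      Real.log_mul hT.ne' hW.ne'] at this
    nlinarith
  have h2 := Finset.sum_le_sum fun s (_ : s ∈ Finset.univ) => h1 s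
  simp only [Finset.sum_sub_distrib, Finset.sum_add_distrib] at h2
  unfold entW
  linarith

lemma entW_unit {S : Type*} [Fintype S] (p : S → ℝ) (hsum : ∑ s, p s = 1) :
    entW p (fun _ => ()) = 0 := by
  simp [entW, fibMass, hsum]

lemma entW_indep {EA EB EC : Type*} [Fintype EA] [Fintype EB] [Fintype EC]
    (pa : EA → ℝ) (pb : EB → ℝ) (pc : EC → ℝ)
    (ha : ∑ a, pa a = 1) (hb : ∑ b, pb b = 1) (hc : ∑ c, pc c = 1)
    (p : EA × EB × EC → ℝ) (hp : ∀ s, p s = pa s.1 * pb s.2.1 * pc s.2.2) :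
    entW p (fun s => (s.1, s.2.1, s.2.2)) =
      entW p (fun s => s.1) + entW p (fun s => s.2.1) + entW p (fun s => s.2.2) := by
  classical
  have qA : ∀ s, fibMass p (fun s => s.1) s = pa s.1 := by
    intro s
    simp only [fibMass, hp, Fintype.sum_prod_type]
    rw [Finset.sum_eq_single s.1]
    · simp [← Finset.mul_sum, hb, hc]
    · intro b _ h; simp [h]
    · simp
  have qB : ∀ s, fibMass p (fun s => s.2.1) s = pb s.2.1 := by
    intro s
    simp only [fibMass, hp, Fintype.sum_prod_type]
    rw [Finset.sum_comm, Finset.sum_eq_single s.2.1]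
    · simp [← Finset.mul_sum, ← Finset.sum_mul, ha, hc]
    · intro b _ h; simp [h]
    · simp
  have qC : ∀ s, fibMass p (fun s => s.2.2) s = pc s.2.2 := by
    intro s
    simp [fibMass, hp, Fintype.sum_prod_type, ← Finset.sum_mul, ← Finset.mul_sum, ha, hb]
  have qABC : ∀ s, fibMass p (fun s => (s.1, s.2.1, s.2.2)) s = p s := by
    intro s
    simp [fibMass]
  simp only [entW, qA, qB, qC, qABC]
  rw [← neg_add, ← neg_add, ← Finset.sum_add_distrib, ← Finset.sum_add_distrib]
  congr 1
  refine Finset.sum_congr rfl fun s _ => ?_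
  by_cases h0 : p s = 0
  · simp [h0]
  have h1 := h0
  rw [hp] at h1
  have h2 := left_ne_zero_of_mul h1
  rw [← mul_add, ← mul_add, ← Real.log_mul (left_ne_zero_of_mul h2) (right_ne_zero_of_mul h2),
    ← Real.log_mul h2 (right_ne_zero_of_mul h1), ← hp]

lemma entH_eq_entW {Ω S E : Type*} [MeasurableSpace Ω] [Fintype S] [Fintype E]
    (μ : Measure Ω) [IsProbabilityMeasure μ] (R : Ω → S) (hR : ∀ s, MeasurableSet (R ⁻¹' {s}))
    (F : S → E) :
    entH μ (fun ω => F (R ω)) = entW (fun s => (μ (R ⁻¹' {s})).toReal) F := by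
  classical
  have h1 : ∀ e, (μ ((fun ω => F (R ω)) ⁻¹' {e})).toReal
      = ∑ s, if F s = e then (μ (R ⁻¹' {s})).toReal else 0 := by
    intro e
    have : (fun ω => F (R ω)) ⁻¹' {e} = ⋃ s ∈ Finset.univ.filter (fun s => F s = e), R ⁻¹' {s} := by
      ext ω; simp
    rw [this, measure_biUnion_finset, ENNReal.toReal_sum, Finset.sum_filter]
    · intro s _; exact measure_ne_top _ _
    · intro s _ t _ hst
      exact Disjoint.preimage _ (by simpa using hst)
    · intro s _; exact hR s
  unfold entH entW
  rw [← Finset.sum_neg_distrib]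
  simp_rw [Real.negMulLog, h1]
  have h2 : ∀ e : E, -(∑ s, if F s = e then (μ (R ⁻¹' {s})).toReal else 0) *
      Real.log (∑ s, if F s = e then (μ (R ⁻¹' {s})).toReal else 0)
      = ∑ s, if F s = e then -((μ (R ⁻¹' {s})).toReal *
        Real.log (fibMass (fun s => (μ (R ⁻¹' {s})).toReal) F s)) else 0 := by
    intro e
    rw [neg_mul, Finset.sum_mul, ← Finset.sum_neg_distrib]
    refine Finset.sum_congr rfl fun s _ => ?_
    split_ifs with h
    · subst h; rfl
    · simp
  simp_rw [h2]
  rw [Finset.sum_comm]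
  simp

lemma sum_masses {Ω S : Type*} [MeasurableSpace Ω] [Fintype S]
    (μ : Measure Ω) [IsProbabilityMeasure μ] (R : Ω → S) (hR : ∀ s, MeasurableSet (R ⁻¹' {s})) :
    ∑ s, (μ (R ⁻¹' {s})).toReal = 1 := by
  classical
  have h := measure_biUnion_finset (μ := μ) (s := Finset.univ) (f := fun s => R ⁻¹' {s})
    (fun s _ t _ hst => Disjoint.preimage _ (by simpa using hst)) (fun s _ => hR s)
  have h2 : (⋃ s ∈ (Finset.univ : Finset S), R ⁻¹' {s}) = Set.univ := by ext ω; simp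
  rw [h2, measure_univ] at h
  rw [← ENNReal.toReal_sum (fun s _ => measure_ne_top _ _), ← h, ENNReal.toReal_one]

/-- The Shannon-type argument for the weighted version. -/
lemma triangle_weighted {EA EB EC EX EY EZ : Type*} [Fintype EA] [Fintype EB] [Fintype EC]
    (p : EA × EB × EC → ℝ) (hp : ∀ s, 0 ≤ p s) (hsum : ∑ s, p s = 1)
    (f : EB → EC → EX) (g : EA → EC → EY) (h : EA → EB → EZ)
    (hind : entW p (fun s => (s.1, s.2.1, s.2.2)) =
      entW p (fun s => s.1) + entW p (fun s => s.2.1) + entW p (fun s => s.2.2)) :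
    0 ≤ -3 * entW p (fun s => f s.2.1 s.2.2) - 3 * entW p (fun s => g s.1 s.2.2) - 3 * entW p (fun s => h s.1 s.2.1)
      + 2 * entW p (fun s => (f s.2.1 s.2.2, g s.1 s.2.2)) + 2 * entW p (fun s => (f s.2.1 s.2.2, h s.1 s.2.1))
      + 3 * entW p (fun s => (g s.1 s.2.2, h s.1 s.2.1))
      - entW p (fun s => (f s.2.1 s.2.2, g s.1 s.2.2, h s.1 s.2.1)) := by
  have h0 := entW_unit p hsum
  have i1 := entW_submod p hp hsum (fun s => (s.1, h s.1 s.2.1)) (fun s => (f s.2.1 s.2.2, h s.1 s.2.1))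
    (fun s => (s.1, f s.2.1 s.2.2, h s.1 s.2.1)) (fun s => h s.1 s.2.1)
    (by grind) (by grind) (by grind)
  have i2 := entW_submod p hp hsum (fun s => s.2.1) (fun s => s.2.2)
    (fun s => (s.2.1, s.2.2)) (fun _ => ())
    (by grind) (by grind) (by grind)
  have i3 := entW_submod p hp hsum (fun s => (s.1, s.2.2)) (fun s => (g s.1 s.2.2, h s.1 s.2.1))
    (fun s => (s.1, s.2.2, h s.1 s.2.1)) (fun s => g s.1 s.2.2)
    (by grind) (by grind) (by grind)
  have i4 := entW_submod p hp hsum (fun s => (s.2.1, s.2.2)) (fun s => (f s.2.1 s.2.2, g s.1 s.2.2))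
    (fun s => (s.2.1, s.2.2, g s.1 s.2.2)) (fun s => f s.2.1 s.2.2)
    (by grind) (by grind) (by grind)
  have i5 := entW_submod p hp hsum (fun s => (s.2.1, s.2.2)) (fun s => (f s.2.1 s.2.2, h s.1 s.2.1))
    (fun s => (s.2.1, s.2.2, h s.1 s.2.1)) (fun s => f s.2.1 s.2.2)
    (by grind) (by grind) (by grind)
  have i6 := entW_submod p hp hsum (fun s => s.1) (fun s => s.2.1)
    (fun s => (s.1, s.2.1)) (fun _ => ())
    (by grind) (by grind) (by grind)
  have i7 := entW_submod p hp hsum (fun s => (s.1, s.2.2)) (fun s => (s.2.1, s.2.2, g s.1 s.2.2))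
    (fun s => (s.1, s.2.1, s.2.2)) (fun s => (s.2.2, g s.1 s.2.2))
    (by grind) (by grind) (by grind)
  have i8 := entW_submod p hp hsum (fun s => (s.1, g s.1 s.2.2)) (fun s => (f s.2.1 s.2.2, g s.1 s.2.2))
    (fun s => (s.1, f s.2.1 s.2.2, g s.1 s.2.2)) (fun s => g s.1 s.2.2)
    (by grind) (by grind) (by grind)
  have i9 := entW_submod p hp hsum (fun s => (s.2.2, g s.1 s.2.2)) (fun s => (g s.1 s.2.2, h s.1 s.2.1))
    (fun s => (s.2.2, g s.1 s.2.2, h s.1 s.2.1)) (fun s => g s.1 s.2.2)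
    (by grind) (by grind) (by grind)
  have i10 := entW_submod p hp hsum (fun s => s.1) (fun s => s.2.2)
    (fun s => (s.1, s.2.2)) (fun _ => ())
    (by grind) (by grind) (by grind)
  have i11 := entW_submod p hp hsum (fun s => (s.1, s.2.1)) (fun s => (s.1, s.2.2, h s.1 s.2.1))
    (fun s => (s.1, s.2.1, s.2.2)) (fun s => (s.1, h s.1 s.2.1))
    (by grind) (by grind) (by grind)
  have i12 := entW_submod p hp hsum (fun s => (s.1, f s.2.1 s.2.2)) (fun s => (s.2.1, s.2.2))
    (fun s => (s.1, s.2.1, s.2.2)) (fun s => f s.2.1 s.2.2)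
    (by grind) (by grind) (by grind)
  have i13 := entW_submod p hp hsum (fun s => (s.1, s.2.1)) (fun s => (s.2.1, s.2.2, h s.1 s.2.1))
    (fun s => (s.1, s.2.1, s.2.2)) (fun s => (s.2.1, h s.1 s.2.1))
    (by grind) (by grind) (by grind)
  have i14 := entW_submod p hp hsum (fun s => (s.1, s.2.1)) (fun s => (g s.1 s.2.2, h s.1 s.2.1))
    (fun s => (s.1, s.2.1, g s.1 s.2.2)) (fun s => h s.1 s.2.1)
    (by grind) (by grind) (by grind)
  have i15 := entW_submod p hp hsum (fun s => (s.1, f s.2.1 s.2.2, g s.1 s.2.2)) (fun s => (s.1, f s.2.1 s.2.2, h s.1 s.2.1))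
    (fun s => (s.1, f s.2.1 s.2.2, g s.1 s.2.2, h s.1 s.2.1)) (fun s => (s.1, f s.2.1 s.2.2))
    (by grind) (by grind) (by grind)
  have i16 := entW_submod p hp hsum (fun s => (s.1, s.2.1, g s.1 s.2.2)) (fun s => (s.1, s.2.2))
    (fun s => (s.1, s.2.1, s.2.2)) (fun s => (s.1, g s.1 s.2.2))
    (by grind) (by grind) (by grind)
  have i17 := entW_submod p hp hsum (fun s => (s.1, f s.2.1 s.2.2, g s.1 s.2.2, h s.1 s.2.1)) (fun s => (s.2.1, s.2.2, g s.1 s.2.2, h s.1 s.2.1))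
    (fun s => (s.1, s.2.1, s.2.2)) (fun s => (f s.2.1 s.2.2, g s.1 s.2.2, h s.1 s.2.1))
    (by grind) (by grind) (by grind)
  have i18 := entW_submod p hp hsum (fun s => (s.2.1, h s.1 s.2.1)) (fun s => (s.2.2, g s.1 s.2.2, h s.1 s.2.1))
    (fun s => (s.2.1, s.2.2, g s.1 s.2.2, h s.1 s.2.1)) (fun s => h s.1 s.2.1)
    (by grind) (by grind) (by grind)
  linarith

/-- **Third marginal entropy inequality for the classical triangle scenario**:
`-3H(X) - 3H(Y) - 3H(Z) + 2H(X,Y) + 2H(X,Z) + 3H(Y,Z) - H(X,Y,Z) ≥ 0`. -/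
theorem triangle_marginal_inequality_three
    {Ω EA EB EC EX EY EZ : Type*} [MeasurableSpace Ω]
    [Fintype EA] [Fintype EB] [Fintype EC] [Fintype EX] [Fintype EY] [Fintype EZ]
    [MeasurableSpace EA] [MeasurableSingletonClass EA]
    [MeasurableSpace EB] [MeasurableSingletonClass EB]
    [MeasurableSpace EC] [MeasurableSingletonClass EC]
    (μ : Measure Ω) [IsProbabilityMeasure μ]
    (A : Ω → EA) (B : Ω → EB) (C : Ω → EC)
    (hA : Measurable A) (hB : Measurable B) (hC : Measurable C)
    (hindep : ∀ (a : EA) (b : EB) (c : EC),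
      μ (A ⁻¹' {a} ∩ B ⁻¹' {b} ∩ C ⁻¹' {c})
        = μ (A ⁻¹' {a}) * μ (B ⁻¹' {b}) * μ (C ⁻¹' {c}))
    (f : EB → EC → EX) (g : EA → EC → EY) (h : EA → EB → EZ)
    (X : Ω → EX) (Y : Ω → EY) (Z : Ω → EZ)
    (hX : ∀ ω, X ω = f (B ω) (C ω)) (hY : ∀ ω, Y ω = g (A ω) (C ω))
    (hZ : ∀ ω, Z ω = h (A ω) (B ω)) :
    0 ≤ -3 * entH μ X - 3 * entH μ Y - 3 * entH μ Z
      + 2 * entH μ (fun ω => (X ω, Y ω)) + 2 * entH μ (fun ω => (X ω, Z ω))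
      + 3 * entH μ (fun ω => (Y ω, Z ω))
      - entH μ (fun ω => (X ω, Y ω, Z ω)) := by
  have hR : ∀ s : EA × EB × EC, MeasurableSet ((fun ω => (A ω, B ω, C ω)) ⁻¹' {s}) := by
    intro s
    exact (hA.prodMk (hB.prodMk hC)) (measurableSet_singleton s)
  have mA := fun a => hA (measurableSet_singleton a)
  have mB := fun a => hB (measurableSet_singleton a)
  have mC := fun a => hC (measurableSet_singleton a)
  have hX' := funext hX
  have hY' := funext hY
  have hZ' := funext hZ
  subst hX' hY' hZ'
  have main := triangle_weighted
    (fun s : EA × EB × EC => (μ ((fun ω => (A ω, B ω, C ω)) ⁻¹' {s})).toReal)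
    (fun s => ENNReal.toReal_nonneg) (sum_masses μ _ hR) f g h
    (entW_indep (fun a => (μ (A ⁻¹' {a})).toReal) (fun b => (μ (B ⁻¹' {b})).toReal)
      (fun c => (μ (C ⁻¹' {c})).toReal) (sum_masses μ A mA) (sum_masses μ B mB)
      (sum_masses μ C mC) _ (by
        rintro ⟨a, b, c⟩
        dsimp only
        rw [← ENNReal.toReal_mul, ← ENNReal.toReal_mul, ← hindep]
        congr 2
        ext ω
        simp [and_assoc]))
  simp only [← entH_eq_entW μ (fun ω => (A ω, B ω, C ω)) hR] at main
  exact main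
end

section
/- Braunstein–Caves entropic Bell inequality: for any four jointly distributed finite random variables X0, X1, Y0, Y1, the inequality H(Y1|X1) + H(X1|Y0) + H(X0|Y1) - H(X0|Y0) ≥ 0 holds, where H(·|·) denotes the conditional Shannon entropy. -/
open MeasureTheory ProbabilityTheory

theorem term_bound (p ac b ab bc : ℝ) (hp : 0 ≤ p) (h1 : p ≤ ac) (h2 : p ≤ b) (h3 : p ≤ ab)
    (h4 : p ≤ bc) :
    p - ab * bc / b ≤ p * Real.log ac + p * Real.log b - p * Real.log ab - p * Real.log bc := by
  rcases hp.eq_or_lt with h | h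
  · subst h
    have : 0 ≤ ab * bc / b := by positivity
    simp only [zero_mul]
    linarith
  · have hac : 0 < ac := by linarith
    have hb : 0 < b := by linarith
    have hab : 0 < ab := by linarith
    have hbc : 0 < bc := by linarith
    have hx : 0 < ac * b / (ab * bc) := by positivity
    have hl := Real.one_sub_inv_le_log_of_pos hx
    rw [Real.log_div (by positivity) (by positivity), Real.log_mul (ne_of_gt hac) (ne_of_gt hb),
      Real.log_mul (ne_of_gt hab) (ne_of_gt hbc), inv_div] at hl
    have hl2 := mul_le_mul_of_nonneg_left hl hp
    have : p * (ab * bc / (ac * b)) ≤ ab * bc / b := by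
      have e : p * (ab * bc / (ac * b)) = (p / ac) * (ab * bc / b) := by field_simp
      rw [e]
      exact mul_le_of_le_one_left (by positivity) ((div_le_one hac).2 h1)
    nlinarith

theorem finite_triangle {A B C : Type*} [Fintype A] [Fintype B] [Fintype C]
    (p : A → B → C → ℝ) (hp : ∀ a b c, 0 ≤ p a b c) :
    (∑ a, ∑ c, Real.negMulLog (∑ b, p a b c)) + ∑ b, Real.negMulLog (∑ a, ∑ c, p a b c) ≤
    (∑ a, ∑ b, Real.negMulLog (∑ c, p a b c)) + ∑ b, ∑ c, Real.negMulLog (∑ a, p a b c) := by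
  have e1 : (∑ a, ∑ c, Real.negMulLog (∑ b, p a b c)) =
      -∑ b, ∑ a, ∑ c, p a b c * Real.log (∑ b, p a b c) := by
    rw [Finset.sum_comm (s := (Finset.univ : Finset B)), ← Finset.sum_neg_distrib]
    refine Finset.sum_congr rfl fun a _ => ?_
    rw [Finset.sum_comm, ← Finset.sum_neg_distrib]
    refine Finset.sum_congr rfl fun c _ => ?_
    rw [Real.negMulLog, neg_mul, Finset.sum_mul]
  have e2 : (∑ b, Real.negMulLog (∑ a, ∑ c, p a b c)) =
      -∑ b, ∑ a, ∑ c, p a b c * Real.log (∑ a, ∑ c, p a b c) := by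
    rw [← Finset.sum_neg_distrib]
    refine Finset.sum_congr rfl fun b _ => ?_
    simp only [Real.negMulLog, neg_mul, Finset.sum_mul]
  have e3 : (∑ a, ∑ b, Real.negMulLog (∑ c, p a b c)) =
      -∑ b, ∑ a, ∑ c, p a b c * Real.log (∑ c, p a b c) := by
    rw [Finset.sum_comm]
    simp only [Real.negMulLog, neg_mul, Finset.sum_mul, Finset.sum_neg_distrib]
  have e4 : (∑ b, ∑ c, Real.negMulLog (∑ a, p a b c)) =
      -∑ b, ∑ a, ∑ c, p a b c * Real.log (∑ a, p a b c) := by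
    rw [← Finset.sum_neg_distrib]
    refine Finset.sum_congr rfl fun b _ => ?_
    rw [Finset.sum_comm]
    simp only [Real.negMulLog, neg_mul, Finset.sum_mul, Finset.sum_neg_distrib]
  have key : (∑ b, ∑ a, ∑ c, (p a b c -
      (∑ c, p a b c) * (∑ a, p a b c) / (∑ a, ∑ c, p a b c))) ≤
      ∑ b, ∑ a, ∑ c, (p a b c * Real.log (∑ b, p a b c)
        + p a b c * Real.log (∑ a, ∑ c, p a b c)
        - p a b c * Real.log (∑ c, p a b c) - p a b c * Real.log (∑ a, p a b c)) := by
    refine Finset.sum_le_sum fun b _ => Finset.sum_le_sum fun a _ => Finset.sum_le_sum fun c _ => ?_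
    have h3 : p a b c ≤ ∑ c, p a b c :=
      Finset.single_le_sum (f := fun c => p a b c) (fun c _ => hp a b c) (Finset.mem_univ c)
    refine term_bound _ _ _ _ _ (hp a b c) ?_ (h3.trans ?_) h3 ?_
    · exact Finset.single_le_sum (f := fun b => p a b c) (fun b _ => hp a b c) (Finset.mem_univ b)
    · exact Finset.single_le_sum (f := fun a => ∑ c, p a b c)
        (fun a _ => Finset.sum_nonneg fun c _ => hp a b c) (Finset.mem_univ a)
    · exact Finset.single_le_sum (f := fun a => p a b c) (fun a _ => hp a b c) (Finset.mem_univ a)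
  have z : (∑ b, ∑ a, ∑ c, (p a b c -
      (∑ c, p a b c) * (∑ a, p a b c) / (∑ a, ∑ c, p a b c))) = 0 := by
    refine Finset.sum_eq_zero fun b _ => ?_
    simp only [Finset.sum_sub_distrib]
    simp only [← Finset.sum_div, ← Finset.mul_sum, ← Finset.sum_mul]
    rw [Finset.sum_comm (f := fun c a => p a b c), mul_self_div_self, sub_self]
  rw [z] at key
  simp only [Finset.sum_sub_distrib, Finset.sum_add_distrib] at key
  rw [e1, e2, e3, e4]
  linarith

theorem real_split {Ω E : Type*} [MeasurableSpace Ω] [Fintype E]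
    [MeasurableSpace E] [MeasurableSingletonClass E]
    (μ : Measure Ω) [IsProbabilityMeasure μ] (X : Ω → E) (hX : Measurable X) (s : Set Ω) :
    (μ s).toReal = ∑ e, (μ (s ∩ X ⁻¹' {e})).toReal := by
  have h := sum_measureReal_preimage_singleton (μ := μ.restrict s) (Finset.univ : Finset E)
    (f := X) (fun y _ => hX (measurableSet_singleton y))
  simp only [Measure.real, Finset.coe_univ, Set.preimage_univ, Measure.restrict_apply_univ] at h
  rw [← h]
  refine Finset.sum_congr rfl fun e _ => ?_
  rw [Measure.restrict_apply (hX (measurableSet_singleton e)), Set.inter_comm]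

theorem entH_triangle {Ω A B C : Type*} [MeasurableSpace Ω]
    [Fintype A] [Fintype B] [Fintype C]
    [MeasurableSpace A] [MeasurableSingletonClass A]
    [MeasurableSpace B] [MeasurableSingletonClass B]
    [MeasurableSpace C] [MeasurableSingletonClass C]
    (μ : Measure Ω) [IsProbabilityMeasure μ]
    (X : Ω → A) (Y : Ω → B) (Z : Ω → C)
    (hX : Measurable X) (hY : Measurable Y) (hZ : Measurable Z) :
    entH μ (fun ω => (X ω, Z ω)) + entH μ Y ≤
      entH μ (fun ω => (X ω, Y ω)) + entH μ (fun ω => (Y ω, Z ω)) := by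
  have h := finite_triangle
    (fun a b c => (μ (X ⁻¹' {a} ∩ Y ⁻¹' {b} ∩ Z ⁻¹' {c})).toReal)
    (fun a b c => ENNReal.toReal_nonneg)
  have hac : ∀ a c, (μ ((fun ω => (X ω, Z ω)) ⁻¹' {(a, c)})).toReal =
      ∑ b, (μ (X ⁻¹' {a} ∩ Y ⁻¹' {b} ∩ Z ⁻¹' {c})).toReal := by
    intro a c
    rw [real_split μ Y hY]
    refine Finset.sum_congr rfl fun b _ => ?_
    congr 2
    ext ω
    simp
    tauto
  have hab : ∀ a b, (μ ((fun ω => (X ω, Y ω)) ⁻¹' {(a, b)})).toReal =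
      ∑ c, (μ (X ⁻¹' {a} ∩ Y ⁻¹' {b} ∩ Z ⁻¹' {c})).toReal := by
    intro a b
    rw [real_split μ Z hZ]
    refine Finset.sum_congr rfl fun c _ => ?_
    congr 2
    ext ω
    simp
  have hbc : ∀ b c, (μ ((fun ω => (Y ω, Z ω)) ⁻¹' {(b, c)})).toReal =
      ∑ a, (μ (X ⁻¹' {a} ∩ Y ⁻¹' {b} ∩ Z ⁻¹' {c})).toReal := by
    intro b c
    rw [real_split μ X hX]
    refine Finset.sum_congr rfl fun a _ => ?_
    congr 2
    ext ω
    simp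
    tauto
  have hb : ∀ b, (μ (Y ⁻¹' {b})).toReal =
      ∑ a, ∑ c, (μ (X ⁻¹' {a} ∩ Y ⁻¹' {b} ∩ Z ⁻¹' {c})).toReal := by
    intro b
    rw [real_split μ X hX]
    refine Finset.sum_congr rfl fun a _ => ?_
    rw [real_split μ Z hZ, Set.inter_comm (Y ⁻¹' {b})]
  simp only [entH, Fintype.sum_prod_type, hac, hab, hbc, hb]
  exact h

/-- **Braunstein–Caves entropic Bell inequality**: for any four jointly distributed
finite random variables `X0, X1, Y0, Y1`,
`H(Y1|X1) + H(X1|Y0) + H(X0|Y1) - H(X0|Y0) ≥ 0`. -/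
theorem braunstein_caves_inequality {Ω E0 E1 F0 F1 : Type*} [MeasurableSpace Ω]
    [Fintype E0] [Fintype E1] [Fintype F0] [Fintype F1]
    [MeasurableSpace E0] [MeasurableSingletonClass E0]
    [MeasurableSpace E1] [MeasurableSingletonClass E1]
    [MeasurableSpace F0] [MeasurableSingletonClass F0]
    [MeasurableSpace F1] [MeasurableSingletonClass F1]
    (μ : Measure Ω) [IsProbabilityMeasure μ]
    (X0 : Ω → E0) (X1 : Ω → E1) (Y0 : Ω → F0) (Y1 : Ω → F1)
    (hX0 : Measurable X0) (hX1 : Measurable X1)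
    (hY0 : Measurable Y0) (hY1 : Measurable Y1) :
    0 ≤ condEnt μ Y1 X1 + condEnt μ X1 Y0 + condEnt μ X0 Y1 - condEnt μ X0 Y0 := by
  have h1 := entH_triangle μ X0 Y1 Y0 hX0 hY1 hY0
  have h2 := entH_triangle μ Y1 X1 Y0 hY1 hX1 hY0
  unfold condEnt
  linarith
end

section
/- Classical information causality inequality (two inputs): let X1, X2, A be mutually independent finite random variables, let Z = f(X1, X2, A) for a deterministic function f, and let Y1 = g1(Z, A) and Y2 = g2(Z, A) for deterministic functions g1, g2. Then I(X1 : Y1) + I(X2 : Y2) ≤ H(Z), where I denotes mutual information and H the Shannon entropy. -/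
open MeasureTheory ProbabilityTheory

open Classical in
/-- pushforward weight -/
noncomputable def icP {T E : Type*} [Fintype T] (p : T → ℝ) (φ : T → E) (e : E) : ℝ :=
  ∑ t, if φ t = e then p t else 0

noncomputable def icH {T E : Type*} [Fintype T] [Fintype E] (p : T → ℝ) (φ : T → E) : ℝ :=
  ∑ e, Real.negMulLog (icP p φ e)

lemma icP_nonneg {T E : Type*} [Fintype T] (p : T → ℝ) (hp : ∀ t, 0 ≤ p t) (φ : T → E) (e : E) :
    0 ≤ icP p φ e := by
  unfold icP
  apply Finset.sum_nonneg
  intro t _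
  split_ifs
  · exact hp t
  · exact le_rfl

lemma icP_ge {T E : Type*} [Fintype T] (p : T → ℝ) (hp : ∀ t, 0 ≤ p t) (φ : T → E) (t : T) :
    p t ≤ icP p φ (φ t) := by
  classical
  unfold icP
  have := Finset.single_le_sum (f := fun s => if φ s = φ t then p s else 0) (s := Finset.univ)
    (fun s _ => by split_ifs; exacts [hp s, le_rfl]) (Finset.mem_univ t)
  simpa using this

lemma icP_sum {T E : Type*} [Fintype T] [Fintype E] (p : T → ℝ) (φ : T → E) (G : E → ℝ) :
    ∑ e, icP p φ e * G e = ∑ t, p t * G (φ t) := by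
  classical
  simp only [icP, Finset.sum_mul]
  rw [Finset.sum_comm]
  apply Finset.sum_congr rfl
  intro t _
  simp [ite_mul]

lemma icP_marg {T E F : Type*} [Fintype T] [Fintype E] (p : T → ℝ) (φ : T → E) (χ : T → F)
    (c : F) : ∑ a, icP p (fun t => (φ t, χ t)) (a, c) = icP p χ c := by
  classical
  simp only [icP]
  rw [Finset.sum_comm]
  apply Finset.sum_congr rfl
  intro t _
  by_cases h : χ t = c <;> simp [h]

lemma icH_eq {T E : Type*} [Fintype T] [Fintype E] (p : T → ℝ) (φ : T → E) :
    icH p φ = ∑ t, p t * (-Real.log (icP p φ (φ t))) := by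
  rw [← icP_sum p φ (fun e => -Real.log (icP p φ e))]
  unfold icH Real.negMulLog
  apply Finset.sum_congr rfl
  intro t _
  ring

lemma icH_congr {T E F : Type*} [Fintype T] [Fintype E] [Fintype F] (p : T → ℝ)
    (φ : T → E) (ψ : T → F) (h : ∀ s t, φ s = φ t ↔ ψ s = ψ t) : icH p φ = icH p ψ := by
  classical
  simp only [icH_eq, icP]
  refine Finset.sum_congr rfl fun t _ => ?_
  congr 3
  refine Finset.sum_congr rfl fun s _ => ?_
  by_cases hs : φ s = φ t
  · rw [if_pos hs, if_pos ((h s t).1 hs)]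
  · rw [if_neg hs, if_neg (fun h' => hs ((h s t).2 h'))]

lemma icH_submod {T E F G : Type*} [Fintype T] [Fintype E] [Fintype F] [Fintype G]
    (p : T → ℝ) (hp : ∀ t, 0 ≤ p t) (φ : T → E) (ψ : T → F) (χ : T → G) :
    icH p (fun t => (φ t, ψ t, χ t)) + icH p χ
      ≤ icH p (fun t => (φ t, χ t)) + icH p (fun t => (ψ t, χ t)) := by
  set P3 := icP p (fun t => (φ t, ψ t, χ t)) with hP3
  set P1 := icP p (fun t => (φ t, χ t)) with hP1
  set P2 := icP p (fun t => (ψ t, χ t)) with hP2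
  set P0 := icP p χ with hP0
  have n3 : ∀ e, 0 ≤ P3 e := icP_nonneg p hp _
  have n1 : ∀ e, 0 ≤ P1 e := icP_nonneg p hp _
  have n2 : ∀ e, 0 ≤ P2 e := icP_nonneg p hp _
  have n0 : ∀ e, 0 ≤ P0 e := icP_nonneg p hp _
  let R : E × F × G → ℝ := fun e => P1 (e.1, e.2.2) * P2 e.2 / (P3 e * P0 e.2.2)
  have key : ∑ t, p t * R (φ t, ψ t, χ t) ≤ ∑ t, p t := by
    rw [← icP_sum p (fun t => (φ t, ψ t, χ t)) R]
    calc ∑ e, P3 e * R e ≤ ∑ e : E × F × G, P1 (e.1, e.2.2) * P2 e.2 / P0 e.2.2 := by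
          apply Finset.sum_le_sum
          intro e _
          by_cases h : P3 e = 0
          · rw [h, zero_mul]
            exact div_nonneg (mul_nonneg (n1 _) (n2 _)) (n0 _)
          · apply le_of_eq
            simp only [R]
            by_cases h0 : P0 e.2.2 = 0
            · simp [h0]
            · field_simp
      _ = ∑ c, P0 c * P0 c / P0 c := by
          rw [Fintype.sum_prod_type_right, Fintype.sum_prod_type_right]
          apply Finset.sum_congr rfl
          intro c _
          have h1 : ∑ a, P1 (a, c) = P0 c := icP_marg p φ χ c
          have h2 : ∑ b, P2 (b, c) = P0 c := icP_marg p ψ χ c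
          simp only [← Finset.sum_div, ← Finset.sum_mul, ← Finset.mul_sum, h1, h2]
      _ = ∑ c, P0 c * 1 := by
          apply Finset.sum_congr rfl
          intro c _
          rw [mul_self_div_self, mul_one]
      _ = ∑ t, p t := by
          rw [icP_sum p χ (fun _ => 1)]; simp
  simp only [icH_eq, ← Finset.sum_add_distrib]
  have hpt : ∀ t, p t * (-Real.log (P3 (φ t, ψ t, χ t))) + p t * (-Real.log (P0 (χ t)))
      ≤ (p t * (-Real.log (P1 (φ t, χ t))) + p t * (-Real.log (P2 (ψ t, χ t))))
        + (p t * R (φ t, ψ t, χ t) - p t) := by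
    intro t
    rcases (hp t).eq_or_lt with h | h
    · simp [← h]
    have q3 : 0 < P3 (φ t, ψ t, χ t) := h.trans_le (icP_ge p hp (fun t => (φ t, ψ t, χ t)) t)
    have q1 : 0 < P1 (φ t, χ t) := h.trans_le (icP_ge p hp (fun t => (φ t, χ t)) t)
    have q2 : 0 < P2 (ψ t, χ t) := h.trans_le (icP_ge p hp (fun t => (ψ t, χ t)) t)
    have q0 : 0 < P0 (χ t) := h.trans_le (icP_ge p hp χ t)
    have hR : 0 < R (φ t, ψ t, χ t) := by simp only [R]; positivity
    have hl := Real.log_le_sub_one_of_pos hR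
    have hlog : Real.log (R (φ t, ψ t, χ t)) = Real.log (P1 (φ t, χ t))
        + Real.log (P2 (ψ t, χ t)) - (Real.log (P3 (φ t, ψ t, χ t)) + Real.log (P0 (χ t))) := by
      simp only [R]
      rw [Real.log_div (by positivity) (by positivity), Real.log_mul q1.ne' q2.ne',
        Real.log_mul q3.ne' q0.ne']
    rw [hlog] at hl
    have := mul_le_mul_of_nonneg_left hl h.le
    linarith
  have := Finset.sum_le_sum (s := Finset.univ) (fun t _ => hpt t)
  rw [Finset.sum_add_distrib (f := fun t => p t * (-Real.log (P1 (φ t, χ t)))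
    + p t * (-Real.log (P2 (ψ t, χ t)))), Finset.sum_sub_distrib] at this
  linarith

lemma ic_bridgeP {Ω T E : Type*} [MeasurableSpace Ω] [Fintype T]
    (μ : Measure Ω) [IsProbabilityMeasure μ] (W : Ω → T)
    (hW : ∀ t, MeasurableSet (W ⁻¹' {t})) (φ : T → E) (X : Ω → E) (hX : ∀ ω, X ω = φ (W ω))
    (e : E) : (μ (X ⁻¹' {e})).toReal = icP (fun t => (μ (W ⁻¹' {t})).toReal) φ e := by
  classical
  unfold icP
  rw [← Finset.sum_filter, ← ENNReal.toReal_sum (fun t _ => measure_ne_top _ _),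
    sum_measure_preimage_singleton _ (fun t _ => hW t)]
  congr 2
  ext ω
  simp [hX]

lemma ic_bridge {Ω T E : Type*} [MeasurableSpace Ω] [Fintype T] [Fintype E]
    (μ : Measure Ω) [IsProbabilityMeasure μ] (W : Ω → T)
    (hW : ∀ t, MeasurableSet (W ⁻¹' {t})) (φ : T → E) (X : Ω → E) (hX : ∀ ω, X ω = φ (W ω)) :
    entH μ X = icH (fun t => (μ (W ⁻¹' {t})).toReal) φ := by
  unfold entH icH
  simp only [ic_bridgeP μ W hW φ X hX]

/-- **Classical information causality inequality (two inputs)**: if `X1, X2, A` are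
mutually independent finite random variables, `Z = f (X1, X2, A)`,
`Y1 = g1 (Z, A)` and `Y2 = g2 (Z, A)`, then `I(X1:Y1) + I(X2:Y2) ≤ H(Z)`. -/
theorem information_causality_inequality {Ω E1 E2 EA EZ F1 F2 : Type*} [MeasurableSpace Ω]
    [Fintype E1] [Fintype E2] [Fintype EA] [Fintype EZ] [Fintype F1] [Fintype F2]
    [MeasurableSpace E1] [MeasurableSingletonClass E1]
    [MeasurableSpace E2] [MeasurableSingletonClass E2]
    [MeasurableSpace EA] [MeasurableSingletonClass EA]
    (μ : Measure Ω) [IsProbabilityMeasure μ]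
    (X1 : Ω → E1) (X2 : Ω → E2) (A : Ω → EA)
    (hX1 : Measurable X1) (hX2 : Measurable X2) (hA : Measurable A)
    (hindep : ∀ (x1 : E1) (x2 : E2) (a : EA),
      μ (X1 ⁻¹' {x1} ∩ X2 ⁻¹' {x2} ∩ A ⁻¹' {a})
        = μ (X1 ⁻¹' {x1}) * μ (X2 ⁻¹' {x2}) * μ (A ⁻¹' {a}))
    (f : E1 → E2 → EA → EZ) (g1 : EZ → EA → F1) (g2 : EZ → EA → F2)
    (Z : Ω → EZ) (Y1 : Ω → F1) (Y2 : Ω → F2)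
    (hZ : ∀ ω, Z ω = f (X1 ω) (X2 ω) (A ω))
    (hY1 : ∀ ω, Y1 ω = g1 (Z ω) (A ω)) (hY2 : ∀ ω, Y2 ω = g2 (Z ω) (A ω)) :
    mutInf μ X1 Y1 + mutInf μ X2 Y2 ≤ entH μ Z := by
  let W : Ω → E1 × E2 × EA := fun ω => (X1 ω, X2 ω, A ω)
  have hpre : ∀ t : E1 × E2 × EA,
      W ⁻¹' {t} = X1 ⁻¹' {t.1} ∩ X2 ⁻¹' {t.2.1} ∩ A ⁻¹' {t.2.2} := by
    rintro ⟨a, b, c⟩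
    ext ω
    simp [W, and_assoc]
  have hW : ∀ t, MeasurableSet (W ⁻¹' {t}) := by
    intro t
    rw [hpre]
    exact ((hX1 (measurableSet_singleton _)).inter (hX2 (measurableSet_singleton _))).inter
      (hA (measurableSet_singleton _))
  set p : E1 × E2 × EA → ℝ := fun t => (μ (W ⁻¹' {t})).toReal with hpdef
  have hp : ∀ t, 0 ≤ p t := fun t => ENNReal.toReal_nonneg
  let x1 : E1 × E2 × EA → E1 := fun t => t.1
  let x2 : E1 × E2 × EA → E2 := fun t => t.2.1
  let xa : E1 × E2 × EA → EA := fun t => t.2.2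
  let z : E1 × E2 × EA → EZ := fun t => f t.1 t.2.1 t.2.2
  let y1 : E1 × E2 × EA → F1 := fun t => g1 (z t) (xa t)
  let y2 : E1 × E2 × EA → F2 := fun t => g2 (z t) (xa t)
  have b1 : entH μ X1 = icH p x1 := ic_bridge μ W hW x1 X1 (fun _ => rfl)
  have b2 : entH μ X2 = icH p x2 := ic_bridge μ W hW x2 X2 (fun _ => rfl)
  have bz : entH μ Z = icH p z := ic_bridge μ W hW z Z hZ
  have by1 : entH μ Y1 = icH p y1 :=
    ic_bridge μ W hW y1 Y1 (fun ω => by rw [hY1, hZ])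
  have by2 : entH μ Y2 = icH p y2 :=
    ic_bridge μ W hW y2 Y2 (fun ω => by rw [hY2, hZ])
  have bxy1 : entH μ (fun ω => (X1 ω, Y1 ω)) = icH p (fun t => (x1 t, y1 t)) :=
    ic_bridge μ W hW (fun t => (x1 t, y1 t)) _ (fun ω => by rw [hY1, hZ])
  have bxy2 : entH μ (fun ω => (X2 ω, Y2 ω)) = icH p (fun t => (x2 t, y2 t)) :=
    ic_bridge μ W hW (fun t => (x2 t, y2 t)) _ (fun ω => by rw [hY2, hZ])
  -- independence
  have hind : icH p (fun t => t) = icH p x1 + icH p x2 + icH p xa := by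
    simp only [icH_eq, ← Finset.sum_add_distrib]
    apply Finset.sum_congr rfl
    intro t _
    have e0 : icP p (fun t => t) t = p t :=
      (ic_bridgeP μ W hW (fun t => t) W (fun _ => rfl) t).symm
    have e1 : icP p x1 (x1 t) = (μ (X1 ⁻¹' {t.1})).toReal :=
      (ic_bridgeP μ W hW x1 X1 (fun _ => rfl) _).symm
    have e2 : icP p x2 (x2 t) = (μ (X2 ⁻¹' {t.2.1})).toReal :=
      (ic_bridgeP μ W hW x2 X2 (fun _ => rfl) _).symm
    have e3 : icP p xa (xa t) = (μ (A ⁻¹' {t.2.2})).toReal :=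
      (ic_bridgeP μ W hW xa A (fun _ => rfl) _).symm
    have hprod : p t = icP p x1 (x1 t) * icP p x2 (x2 t) * icP p xa (xa t) := by
      rw [e1, e2, e3]
      simp only [hpdef]
      rw [hpre, hindep, ENNReal.toReal_mul, ENNReal.toReal_mul]
    rw [e0]
    rcases (hp t).eq_or_lt with h | h
    · simp [← h]
    have q1 := (h.trans_le (icP_ge p hp x1 t)).ne'
    have q2 := (h.trans_le (icP_ge p hp x2 t)).ne'
    have q3 := (h.trans_le (icP_ge p hp xa t)).ne'
    have hl : Real.log (p t) = Real.log (icP p x1 (x1 t)) + Real.log (icP p x2 (x2 t))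
        + Real.log (icP p xa (xa t)) := by
      rw [← Real.log_mul q1 q2, ← Real.log_mul (mul_ne_zero q1 q2) q3, ← hprod]
    rw [hl]
    ring
  let za : E1 × E2 × EA → EZ × EA := fun t => (z t, xa t)
  have s1 := icH_submod p hp x1 za y1
  have s2 := icH_submod p hp x2 za y2
  have s3 := icH_submod p hp x1 x2 za
  have s4 := icH_submod p hp z xa (fun _ => ())
  have hy1 : ∀ s t, za s = za t → y1 s = y1 t := by
    intro s t h
    simp only [za, Prod.mk.injEq] at h
    simp only [y1, h.1, h.2]
  have hy2 : ∀ s t, za s = za t → y2 s = y2 t := by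
    intro s t h
    simp only [za, Prod.mk.injEq] at h
    simp only [y2, h.1, h.2]
  have c1 : icH p (fun t => (za t, y1 t)) = icH p za := icH_congr p _ _ (fun s t => by
    have := hy1 s t
    simp only [Prod.mk.injEq]; tauto)
  have c2 : icH p (fun t => (za t, y2 t)) = icH p za := icH_congr p _ _ (fun s t => by
    have := hy2 s t
    simp only [Prod.mk.injEq]; tauto)
  have c3 : icH p (fun t => (x1 t, za t, y1 t)) = icH p (fun t => (x1 t, za t)) :=
    icH_congr p _ _ (fun s t => by
      have := hy1 s t
      simp only [Prod.mk.injEq]; tauto)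
  have c4 : icH p (fun t => (x2 t, za t, y2 t)) = icH p (fun t => (x2 t, za t)) :=
    icH_congr p _ _ (fun s t => by
      have := hy2 s t
      simp only [Prod.mk.injEq]; tauto)
  have c5 : icH p (fun t => (x1 t, x2 t, za t)) = icH p (fun t => t) :=
    icH_congr p _ _ (fun s t => by
      constructor
      · intro h
        simp only [za, Prod.mk.injEq] at h
        exact Prod.ext h.1 (Prod.ext h.2.1 h.2.2.2)
      · rintro rfl
        rfl)
  have c6 : icH p (fun t => (z t, xa t, ())) = icH p za :=
    icH_congr p _ _ (fun s t => by simp [za])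
  have c7 : icH p (fun t => (z t, ())) = icH p z := icH_congr p _ _ (fun s t => by simp)
  have c8 : icH p (fun t => (xa t, ())) = icH p xa := icH_congr p _ _ (fun s t => by simp)
  have c9 : icH p (fun _ => ()) = 0 := by
    have hs : icP p (fun _ => ()) () = 1 := by
      rw [← ic_bridgeP μ W hW (fun _ => ()) (fun _ => ()) (fun _ => rfl) ()]
      simp
    simp [icH, hs]
  unfold mutInf
  rw [b1, b2, bz, by1, by2, bxy1, bxy2]
  linarith
end

section
/- Information causality inequality without input independence: let X1, X2 and A be finite random variables such that A is independent of the pair (X1, X2), let Z = f(X1, X2, A) for a deterministic function f, and let Y1 = g1(Z, A) and Y2 = g2(Z, A) for deterministic functions g1, g2. Then I(X1 : Y1) + I(X2 : Y2) ≤ H(Z) + I(X1 : X2), where I denotes mutual information and H the Shannon entropy. -/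
open MeasureTheory ProbabilityTheory

/-- All fibres of `X` are measurable. -/
def FibMeas {Ω E : Type*} [MeasurableSpace Ω] (X : Ω → E) : Prop :=
  ∀ e, MeasurableSet (X ⁻¹' {e})

lemma FibMeas.prod {Ω E F : Type*} [MeasurableSpace Ω] {X : Ω → E} {Y : Ω → F}
    (hX : FibMeas X) (hY : FibMeas Y) : FibMeas (fun ω => (X ω, Y ω)) := by
  rintro ⟨e, f⟩
  have : (fun ω => (X ω, Y ω)) ⁻¹' {(e, f)} = X ⁻¹' {e} ∩ Y ⁻¹' {f} := by
    ext ω; simp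
  rw [this]
  exact (hX e).inter (hY f)

lemma FibMeas.comp {Ω E F : Type*} [MeasurableSpace Ω] [Fintype E] {X : Ω → E}
    (hX : FibMeas X) (φ : E → F) {Y : Ω → F} (h : ∀ ω, Y ω = φ (X ω)) : FibMeas Y := by
  intro f
  have : Y ⁻¹' {f} = ⋃ e ∈ {e | φ e = f}, X ⁻¹' {e} := by
    ext ω; simp [h]
  rw [this]
  exact MeasurableSet.biUnion (Set.to_countable _) (fun e _ => hX e)

lemma marg {Ω E : Type*} [MeasurableSpace Ω] [Fintype E]
    (μ : Measure Ω) [IsProbabilityMeasure μ] {X : Ω → E} (hX : FibMeas X)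
    {s : Set Ω} (hs : MeasurableSet s) :
    (μ s).toReal = ∑ e, (μ (X ⁻¹' {e} ∩ s)).toReal := by
  rw [← ENNReal.toReal_sum (fun _ _ => measure_ne_top _ _)]
  congr 1
  rw [← measure_biUnion_finset]
  · congr 1
    ext ω; simp
  · intro e _ e2 _ hne
    refine Set.disjoint_left.2 ?_
    rintro ω ⟨h, _⟩ ⟨hback, _⟩
    exact hne (h.symm.trans hback)
  · exact fun e _ => (hX e).inter hs

lemma entH_graph {Ω E F : Type*} [MeasurableSpace Ω] [Fintype E] [Fintype F]
    (μ : Measure Ω) (X : Ω → E) (Y : Ω → F) (φ : E → F) (h : ∀ ω, Y ω = φ (X ω)) :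
    entH μ X = entH μ (fun ω => (X ω, Y ω)) := by
  unfold entH
  rw [Fintype.sum_prod_type]
  refine Finset.sum_congr rfl fun e _ => ?_
  rw [Finset.sum_eq_single (φ e)]
  · congr 3
    ext ω
    simp only [Set.mem_preimage, Set.mem_singleton_iff, Prod.mk.injEq, h]
    constructor
    · rintro rfl; exact ⟨rfl, rfl⟩
    · exact fun h => h.1
  · intro f _ hf
    have : (fun ω => (X ω, Y ω)) ⁻¹' {(e, f)} = ∅ := by
      ext ω
      simp only [Set.mem_preimage, Set.mem_singleton_iff, Prod.mk.injEq, h,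
        Set.mem_empty_iff_false, iff_false]
      rintro ⟨rfl, rfl⟩
      exact hf rfl
    simp [this]
  · simp

lemma entH_swap {Ω E F : Type*} [MeasurableSpace Ω] [Fintype E] [Fintype F]
    (μ : Measure Ω) (X : Ω → E) (Y : Ω → F) :
    entH μ (fun ω => (X ω, Y ω)) = entH μ (fun ω => (Y ω, X ω)) := by
  unfold entH
  rw [Fintype.sum_prod_type, Fintype.sum_prod_type, Finset.sum_comm]
  refine Finset.sum_congr rfl fun f _ => Finset.sum_congr rfl fun e _ => ?_
  congr 3
  ext ω
  simp [and_comm]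

lemma entH_congr {Ω E F : Type*} [MeasurableSpace Ω] [Fintype E] [Fintype F]
    (μ : Measure Ω) (X : Ω → E) (Y : Ω → F) (φ : E → F) (ψ : F → E)
    (h : ∀ ω, Y ω = φ (X ω)) (hback : ∀ ω, X ω = ψ (Y ω)) :
    entH μ X = entH μ Y := by
  rw [entH_graph μ X Y φ h, entH_swap, ← entH_graph μ Y X ψ hback]

/-- Termwise bound. -/
lemma term_bound_s18 {q a b c : ℝ} (hq : 0 ≤ q) (ha : q ≤ a) (hb : q ≤ b) (hc : q ≤ c) :
    q * (Real.log a + Real.log b - Real.log q - Real.log c) ≤ a * b / c - q := by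
  rcases hq.eq_or_lt with rfl | hq
  · simpa using div_nonneg (mul_nonneg ha hb) hc
  have hapos := hq.trans_le ha
  have hbpos := hq.trans_le hb
  have hcpos := hq.trans_le hc
  have h1 : Real.log a + Real.log b - Real.log q - Real.log c
      = Real.log (a * b / (q * c)) := by
    rw [Real.log_div (by positivity) (by positivity), Real.log_mul hapos.ne' hbpos.ne',
      Real.log_mul hq.ne' hcpos.ne']
    ring
  rw [h1]
  have h2 := Real.log_le_sub_one_of_pos (show 0 < a * b / (q * c) by positivity)
  calc q * Real.log (a * b / (q * c)) ≤ q * (a * b / (q * c) - 1) := by gcongr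
    _ = a * b / c - q := by field_simp

/-- Finite submodularity. -/
lemma submod_fin {E F G : Type*} [Fintype E] [Fintype F] [Fintype G]
    (q : E → F → G → ℝ) (hq : ∀ e f g, 0 ≤ q e f g)
    (a : E → G → ℝ) (b : F → G → ℝ) (c : G → ℝ)
    (ha : ∀ e g, a e g = ∑ f, q e f g) (hb : ∀ f g, b f g = ∑ e, q e f g)
    (hca : ∀ g, c g = ∑ e, a e g) (hcb : ∀ g, c g = ∑ f, b f g) :
    0 ≤ (∑ e, ∑ g, Real.negMulLog (a e g)) + (∑ f, ∑ g, Real.negMulLog (b f g))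
      - (∑ e, ∑ f, ∑ g, Real.negMulLog (q e f g)) - ∑ g, Real.negMulLog (c g) := by
  have a0 : ∀ e g, 0 ≤ a e g := fun e g => by
    rw [ha]; exact Finset.sum_nonneg fun f _ => hq e f g
  have qa : ∀ e f g, q e f g ≤ a e g := fun e f g => by
    rw [ha]
    exact Finset.single_le_sum (f := fun f => q e f g) (fun f _ => hq e f g) (Finset.mem_univ f)
  have qb : ∀ e f g, q e f g ≤ b f g := fun e f g => by
    rw [hb]
    exact Finset.single_le_sum (f := fun e => q e f g) (fun e _ => hq e f g) (Finset.mem_univ e)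
  have qc : ∀ e f g, q e f g ≤ c g := fun e f g => by
    refine (qa e f g).trans ?_
    rw [hca]
    exact Finset.single_le_sum (f := fun e => a e g) (fun e _ => a0 e g) (Finset.mem_univ e)
  have e1 : ∑ e, ∑ g, Real.negMulLog (a e g)
      = - ∑ g, ∑ e, ∑ f, q e f g * Real.log (a e g) := by
    rw [Finset.sum_comm]
    simp only [Real.negMulLog, ← Finset.sum_neg_distrib]
    refine Finset.sum_congr rfl fun g _ => Finset.sum_congr rfl fun e _ => ?_
    rw [Finset.sum_neg_distrib, ← Finset.sum_mul, ← ha]; ring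
  have e2 : ∑ f, ∑ g, Real.negMulLog (b f g)
      = - ∑ g, ∑ e, ∑ f, q e f g * Real.log (b f g) := by
    rw [Finset.sum_comm, ← Finset.sum_neg_distrib]
    refine Finset.sum_congr rfl fun g _ => ?_
    rw [Finset.sum_comm (γ := E), ← Finset.sum_neg_distrib]
    refine Finset.sum_congr rfl fun f _ => ?_
    rw [← Finset.sum_mul, ← hb, Real.negMulLog]; ring
  have e3 : ∑ e, ∑ f, ∑ g, Real.negMulLog (q e f g)
      = - ∑ g, ∑ e, ∑ f, q e f g * Real.log (q e f g) := by
    rw [Finset.sum_comm (γ := G), ← Finset.sum_neg_distrib]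
    refine Finset.sum_congr rfl fun e _ => ?_
    rw [Finset.sum_comm, ← Finset.sum_neg_distrib]
    refine Finset.sum_congr rfl fun g _ => ?_
    rw [← Finset.sum_neg_distrib]
    refine Finset.sum_congr rfl fun f _ => ?_
    rw [Real.negMulLog]; ring
  have e4 : ∑ g, Real.negMulLog (c g)
      = - ∑ g, ∑ e, ∑ f, q e f g * Real.log (c g) := by
    rw [← Finset.sum_neg_distrib]
    refine Finset.sum_congr rfl fun g _ => ?_
    simp only [← Finset.sum_mul, ← ha, ← hca, Real.negMulLog]; ring
  have key : ∑ g, ∑ e, ∑ f, q e f g *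
      (Real.log (a e g) + Real.log (b f g) - Real.log (q e f g) - Real.log (c g))
      ≤ ∑ g, ∑ e, ∑ f, (a e g * b f g / c g - q e f g) :=
    Finset.sum_le_sum fun g _ => Finset.sum_le_sum fun e _ => Finset.sum_le_sum fun f _ =>
      term_bound_s18 (hq e f g) (qa e f g) (qb e f g) (qc e f g)
  have zero : ∑ g, ∑ e, ∑ f, (a e g * b f g / c g - q e f g) = 0 := by
    refine Finset.sum_eq_zero fun g _ => ?_
    simp only [Finset.sum_sub_distrib, ← ha, ← hca, ← Finset.sum_div, ← Finset.mul_sum, ← hcb,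
      ← Finset.sum_mul]
    rw [mul_self_div_self, sub_self]
  rw [zero] at key
  simp only [mul_sub, mul_add, Finset.sum_sub_distrib, Finset.sum_add_distrib] at key
  rw [e1, e2, e3, e4]
  linarith

lemma condMutInf_nonneg {Ω E F G : Type*} [MeasurableSpace Ω]
    [Fintype E] [Fintype F] [Fintype G]
    (μ : Measure Ω) [IsProbabilityMeasure μ] (X : Ω → E) (Y : Ω → F) (Z : Ω → G)
    (hX : FibMeas X) (hY : FibMeas Y) (hZ : FibMeas Z) :
    0 ≤ condMutInf μ X Y Z := by
  unfold condMutInf entH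
  simp only [Fintype.sum_prod_type]
  refine submod_fin (fun e f g => (μ ((fun ω => (X ω, Y ω, Z ω)) ⁻¹' {(e, f, g)})).toReal)
    (fun _ _ _ => ENNReal.toReal_nonneg)
    (fun e g => (μ ((fun ω => (X ω, Z ω)) ⁻¹' {(e, g)})).toReal)
    (fun f g => (μ ((fun ω => (Y ω, Z ω)) ⁻¹' {(f, g)})).toReal)
    (fun g => (μ (Z ⁻¹' {g})).toReal) ?_ ?_ ?_ ?_
  · intro e g
    rw [marg μ hY (hX.prod hZ (e, g))]
    refine Finset.sum_congr rfl fun f _ => ?_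
    congr 2; ext ω; simp; tauto
  · intro f g
    rw [marg μ hX (hY.prod hZ (f, g))]
    refine Finset.sum_congr rfl fun e _ => ?_
    congr 2; ext ω; simp
  · intro g
    rw [marg μ hX (hZ g)]
    refine Finset.sum_congr rfl fun e _ => ?_
    congr 2; ext ω; simp
  · intro g
    rw [marg μ hY (hZ g)]
    refine Finset.sum_congr rfl fun e _ => ?_
    congr 2; ext ω; simp

lemma entH_prod_le {Ω E F : Type*} [MeasurableSpace Ω] [Fintype E] [Fintype F]
    (μ : Measure Ω) [IsProbabilityMeasure μ] (X : Ω → E) (Y : Ω → F)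
    (hX : FibMeas X) (hY : FibMeas Y) :
    entH μ (fun ω => (X ω, Y ω)) ≤ entH μ X + entH μ Y := by
  have hU : FibMeas (fun _ : Ω => ()) := hX.comp (fun _ => ()) (fun _ => rfl)
  have h := condMutInf_nonneg μ X Y (fun _ => ()) hX hY hU
  unfold condMutInf at h
  have h0 : entH μ (fun _ : Ω => ()) = 0 := by
    simp [entH]
  rw [h0, ← entH_graph μ X (fun _ => ()) (fun _ => ()) (fun _ => rfl),
    ← entH_graph μ Y (fun _ => ()) (fun _ => ()) (fun _ => rfl),
    entH_congr μ (fun ω => (X ω, Y ω, ())) (fun ω => (X ω, Y ω)) (fun p => (p.1, p.2.1))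
      (fun p => (p.1, p.2, ())) (fun _ => rfl) (fun _ => rfl)] at h
  linarith

lemma entH_indep {Ω E F : Type*} [MeasurableSpace Ω] [Fintype E] [Fintype F]
    [MeasurableSpace E] [MeasurableSingletonClass E]
    [MeasurableSpace F] [MeasurableSingletonClass F]
    (μ : Measure Ω) [IsProbabilityMeasure μ] (X : Ω → E) (Y : Ω → F)
    (hX : FibMeas X) (hY : FibMeas Y) (h : IndepFun X Y μ) :
    entH μ (fun ω => (X ω, Y ω)) = entH μ X + entH μ Y := by
  have hp : ∀ e f, (μ ((fun ω => (X ω, Y ω)) ⁻¹' {(e, f)})).toReal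
      = (μ (X ⁻¹' {e})).toReal * (μ (Y ⁻¹' {f})).toReal := by
    intro e f
    rw [← ENNReal.toReal_mul, ← h.measure_inter_preimage_eq_mul _ _
      (measurableSet_singleton e) (measurableSet_singleton f)]
    congr 2; ext ω; simp
  have sX : ∑ e, (μ (X ⁻¹' {e})).toReal = 1 := by
    have := marg μ hX MeasurableSet.univ
    simpa using this.symm
  have sY : ∑ e, (μ (Y ⁻¹' {e})).toReal = 1 := by
    have := marg μ hY MeasurableSet.univ
    simpa using this.symm
  unfold entH
  simp only [Fintype.sum_prod_type, hp, Real.negMulLog_mul, Finset.sum_add_distrib,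
    ← Finset.sum_mul, ← Finset.mul_sum, sX, sY, one_mul]

lemma data_proc {Ω E F G : Type*} [MeasurableSpace Ω]
    [Fintype E] [Fintype F] [Fintype G]
    (μ : Measure Ω) [IsProbabilityMeasure μ] (X : Ω → E) (W : Ω → F) (Y : Ω → G)
    (hX : FibMeas X) (hW : FibMeas W) (φ : F → G) (h : ∀ ω, Y ω = φ (W ω)) :
    mutInf μ X Y ≤ mutInf μ X W := by
  have h1 := condMutInf_nonneg μ X W Y hX hW (hW.comp φ h)
  unfold condMutInf at h1
  rw [← entH_graph μ W Y φ h,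
    entH_congr μ (fun ω => (X ω, W ω, Y ω)) (fun ω => (X ω, W ω)) (fun p => (p.1, p.2.1))
      (fun p => (p.1, p.2, φ p.2)) (fun _ => rfl) (fun ω => by simp [h])] at h1
  unfold mutInf
  linarith

/-- **Information causality inequality without input independence**: if `A` is
independent of the pair `(X1, X2)`, `Z = f (X1, X2, A)`, `Y1 = g1 (Z, A)` and
`Y2 = g2 (Z, A)`, then `I(X1:Y1) + I(X2:Y2) ≤ H(Z) + I(X1:X2)`. -/
theorem information_causality_no_input_independence {Ω E1 E2 EA EZ F1 F2 : Type*}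
    [MeasurableSpace Ω]
    [Fintype E1] [Fintype E2] [Fintype EA] [Fintype EZ] [Fintype F1] [Fintype F2]
    [MeasurableSpace E1] [MeasurableSingletonClass E1]
    [MeasurableSpace E2] [MeasurableSingletonClass E2]
    [MeasurableSpace EA] [MeasurableSingletonClass EA]
    (μ : Measure Ω) [IsProbabilityMeasure μ]
    (X1 : Ω → E1) (X2 : Ω → E2) (A : Ω → EA)
    (hX1 : Measurable X1) (hX2 : Measurable X2) (hA : Measurable A)
    (hindep : IndepFun A (fun ω => (X1 ω, X2 ω)) μ)
    (f : E1 → E2 → EA → EZ) (g1 : EZ → EA → F1) (g2 : EZ → EA → F2)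
    (Z : Ω → EZ) (Y1 : Ω → F1) (Y2 : Ω → F2)
    (hZ : ∀ ω, Z ω = f (X1 ω) (X2 ω) (A ω))
    (hY1 : ∀ ω, Y1 ω = g1 (Z ω) (A ω)) (hY2 : ∀ ω, Y2 ω = g2 (Z ω) (A ω)) :
    mutInf μ X1 Y1 + mutInf μ X2 Y2 ≤ entH μ Z + mutInf μ X1 X2 := by
  have mX1 : FibMeas X1 := fun e => hX1 (measurableSet_singleton e)
  have mX2 : FibMeas X2 := fun e => hX2 (measurableSet_singleton e)
  have mA : FibMeas A := fun e => hA (measurableSet_singleton e)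
  have mZ : FibMeas Z := (mX1.prod (mX2.prod mA)).comp (fun p => f p.1 p.2.1 p.2.2) hZ
  have mW : FibMeas (fun ω => (Z ω, A ω)) := mZ.prod mA
  have d1 := data_proc μ X1 (fun ω => (Z ω, A ω)) Y1 mX1 mW (fun p => g1 p.1 p.2) hY1
  have d2 := data_proc μ X2 (fun ω => (Z ω, A ω)) Y2 mX2 mW (fun p => g2 p.1 p.2) hY2
  have s := condMutInf_nonneg μ X1 X2 (fun ω => (Z ω, A ω)) mX1 mX2 mW
  have u := entH_prod_le μ Z A mZ mA
  have i := entH_indep μ A (fun ω => (X1 ω, X2 ω)) mA (mX1.prod mX2) hindep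
  have c := entH_congr μ (fun ω => (X1 ω, X2 ω, Z ω, A ω)) (fun ω => (A ω, X1 ω, X2 ω))
    (fun p => (p.2.2.2, p.1, p.2.1)) (fun p => (p.2.1, p.2.2, f p.2.1 p.2.2 p.1, p.1))
    (fun _ => rfl) (fun ω => by simp [hZ])
  unfold condMutInf at s
  unfold mutInf at *
  linarith
end
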